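/- arXiv:2311.15199 — 8 statements merged into one kernel-verified Lean document; each statement's English description precedes it below -/
import Mathlib

section
/- Let λ be a Young diagram, λ_sym its base subdiagram (maximal symmetric subdiagram), and A the set of boxes of λ not in λ_sym. Suppose every row and every column of λ contains at most one box of A. Write A_u for the boxes of A strictly above the line y = x, A_d for the boxes of A strictly below it, and Ã_d for the reflections of the boxes of A_d across y = x. If both A_u and A_d are nonempty, then the set λ' = λ_sym ∪ A_u ∪ Ã_d is a Young diagram of the same size as λ and its dimension is strictly greater than the dimension of λ. -/
/-!
The comparison rests on Frobenius' formula. If the diagonal boxes of a diagram with `n` boxes have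
arms `a i` and legs `b i`, then the number of its standard tableaux is
`n! * ∏ i, 1 / (a i)! (b i)! (a i + b i + 1) * ∏ j < i, (a j - a i)(b j - b i) / (a j + b i + 1)(a i + b j + 1)`.

The formula (`dimYD_eq_weight`) is proved by induction on `n`. The number of tableaux satisfies the
branching rule (`dimYD_eq_sum_corners`), so the product must be shown to satisfy it as well
(`sum_corners_weight`). Removing a corner off the diagonal lowers one arm or one leg by one, and the
resulting identity between rational functions of the `a i`, `b i` is Lagrange interpolation at the
nodes `a i`, `-b i` of `X * (∏ (X - a i - 1)(X + b i + 1) - ∏ (X - a i)(X + b i))`, see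
`sum_armRatio`. If the last diagonal box is a corner, then two of the nodes coincide at `0`;
removing that box contributes the term of the node `0` in `sum_armRatio_of_zero`.

At most one box of `A` in each row and column means that the arm and the leg of each diagonal box
differ by at most one. Passing from `λ` to `λ'` replaces each pair `(a i, b i)` by
`(max, min)`. This keeps the size and all one-pair factors, and it changes an interaction factor only
if the two pairs are oppositely oriented, `(m + 1, m)` and `(n, n + 1)`. In that case, with
`δ = m - n` and `s = m + n + 2`, the factor rises from `(δ² - 1) / (s² - 1)` to `δ² / s²`
(`frobK_opposite_lt`). All factors are positive, and a box of `A_u` together with a box of `A_d`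
provides an oppositely oriented pair, so the product strictly increases.
-/

open Finset

/-- The hook length of the box `(i,j)` in the Young diagram `μ`: the number of cells of `μ`
consisting of `(i,j)`, the cells above it in column `j`, and the cells to its right in row `i`. -/
def hookLen (μ : YoungDiagram) (i j : ℕ) : ℕ :=
  (μ.cells.filter (fun c => (c.1 = i ∧ j ≤ c.2) ∨ (c.2 = j ∧ i ≤ c.1))).card

/-- `T` is a standard Young tableau of shape `μ`: it fills the cells of `μ` with the numbers
`1, …, μ.card`, increasing along each row and each column (and vanishes off `μ`). -/
def IsSYT (μ : YoungDiagram) (T : ℕ × ℕ → ℕ) : Prop :=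
  (∀ c : ℕ × ℕ, c ∉ μ → T c = 0) ∧
  (∀ c : ℕ × ℕ, c ∈ μ → 1 ≤ T c ∧ T c ≤ μ.card) ∧
  Set.InjOn T ↑μ.cells ∧
  (∀ i j₁ j₂ : ℕ, j₁ < j₂ → (i, j₂) ∈ μ → T (i, j₁) < T (i, j₂)) ∧
  (∀ i₁ i₂ j : ℕ, i₁ < i₂ → (i₂, j) ∈ μ → T (i₁, j) < T (i₂, j))

/-- The dimension of a Young diagram: the number of standard Young tableaux of that shape. -/
noncomputable def dimYD (μ : YoungDiagram) : ℕ := Nat.card { T : ℕ × ℕ → ℕ // IsSYT μ T }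

/-- A Young diagram is symmetric if it is invariant under the reflection `(i,j) ↦ (j,i)`. -/
def YoungDiagram.IsSymm (μ : YoungDiagram) : Prop := ∀ i j : ℕ, (i, j) ∈ μ ↔ (j, i) ∈ μ

/-- The cells of the base (maximal symmetric) subdiagram of `μ`. -/
def baseCells (μ : YoungDiagram) : Finset (ℕ × ℕ) :=
  μ.cells.filter (fun c => (c.2, c.1) ∈ μ.cells)

/-! ### Partial-fraction identities -/

open Polynomial in
/-- Leading-coefficient form of Lagrange interpolation, with the nodes split into the two families
`a i` (`i ∈ s`) and `-b i` (`i ∈ t`). -/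
lemma coeff_eq_sum_two_families (s t : Finset ℕ) (a b : ℕ → ℚ)
    (ha : Set.InjOn a s) (hb : Set.InjOn b t) (hab : ∀ i ∈ s, ∀ j ∈ t, a i + b j ≠ 0)
    (P : ℚ[X]) (m : ℕ) (hm : m + 1 = s.card + t.card) (hP : ∀ n, m < n → P.coeff n = 0) :
    P.coeff m =
      ∑ i ∈ s, P.eval (a i) / ((∏ j ∈ s.erase i, (a i - a j)) * ∏ j ∈ t, (a i + b j)) +
      ∑ i ∈ t, P.eval (-b i) /
        ((∏ j ∈ s, (-b i - a j)) * ∏ j ∈ t.erase i, (-b i + b j)) := by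
  have hv : Set.InjOn (Sum.elim a (fun j => -b j)) (s.disjSum t : Finset (ℕ ⊕ ℕ)) := by
    rintro (i | i) hi (j | j) hj h
    · simp at hi hj h
      rw [ha hi hj h]
    · simp at hi hj h
      exact absurd (by linarith) (hab i hi j hj)
    · simp at hi hj h
      exact absurd (by linarith) (hab j hj i hi)
    · simp at hi hj h
      rw [hb hi hj h]
  have hdeg : P.degree < ((s.disjSum t).card : ℕ) := by
    rw [card_disjSum, ← hm]
    exact (degree_lt_iff_coeff_zero _ _).2 (fun n hn => hP n (by omega))
  have h := Lagrange.coeff_eq_sum hv hdeg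
  rw [card_disjSum, ← hm, Nat.add_sub_cancel, sum_disjSum] at h
  rw [h]
  have e1 : ∀ i, (s.disjSum t).erase (Sum.inl i) = (s.erase i).disjSum t := by
    intro i; ext (j | j) <;> simp
  have e2 : ∀ i, (s.disjSum t).erase (Sum.inr i) = s.disjSum (t.erase i) := by
    intro i; ext (j | j) <;> simp
  simp only [e1, e2, prod_disjSum, Sum.elim_inl, Sum.elim_inr, sub_neg_eq_add]

open Polynomial in
/-- The product of the quadratics `(X - a i)(X + b i) - c i`. -/
noncomputable def quadProd (s : Finset ℕ) (a b c : ℕ → ℚ) : ℚ[X] :=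
  ∏ j ∈ s, ((X - C (a j)) * (X + C (b j)) - C (c j))

open Polynomial in
lemma coeff_quad_mul (F : ℚ[X]) (α β γ : ℚ) (n : ℕ) :
    (((X - C α) * (X + C β) - C γ) * F).coeff (n + 2) =
      F.coeff n + (β - α) * F.coeff (n + 1) - (α * β + γ) * F.coeff (n + 2) := by
  have : ((X - C α) * (X + C β) - C γ) * F =
      X * (X * F) + C (β - α) * (X * F) - C (α * β + γ) * F := by
    simp only [map_sub, map_add, map_mul]; ring
  rw [this]
  simp only [coeff_sub, coeff_add, coeff_C_mul]
  rw [show n + 2 = (n + 1) + 1 from rfl, coeff_X_mul, coeff_X_mul, coeff_X_mul]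

lemma quadProd_insert {s : Finset ℕ} {k : ℕ} (hk : k ∉ s) (a b c : ℕ → ℚ) :
    quadProd (insert k s) a b c =
      ((Polynomial.X - Polynomial.C (a k)) * (Polynomial.X + Polynomial.C (b k))
        - Polynomial.C (c k)) * quadProd s a b c := by
  rw [quadProd, prod_insert hk, quadProd]

lemma quadProd_coeff (s : Finset ℕ) (a b c : ℕ → ℚ) :
    (∀ n, 2 * s.card < n → (quadProd s a b c).coeff n = 0) ∧
      (quadProd s a b c).coeff (2 * s.card) = 1 := by
  induction s using Finset.induction_on with
  | empty =>
    simp only [quadProd, prod_empty, card_empty]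
    refine ⟨fun n hn => ?_, by simp⟩
    rw [Polynomial.coeff_one, if_neg (by omega)]
  | insert k s hk ih =>
    obtain ⟨h0, h1⟩ := ih
    rw [card_insert_of_notMem hk, quadProd_insert hk]
    refine ⟨fun n hn => ?_, ?_⟩
    · obtain ⟨n, rfl⟩ : ∃ m, n = m + 2 := ⟨n - 2, by omega⟩
      rw [coeff_quad_mul, h0 n (by omega), h0 _ (by omega), h0 _ (by omega)]
      ring
    · rw [Nat.mul_add, coeff_quad_mul, h1, h0 _ (by omega), h0 _ (by omega)]
      ring

/-- Perturbing each quadratic `q i = (X - a i)(X + b i)` by a constant `c i` changes the product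
by a polynomial of degree at most `2 |s| - 2`, whose leading term is `- ∑ c i`. -/
lemma quadProd_sub_coeff (s : Finset ℕ) (a b c : ℕ → ℚ) :
    (∀ n, 2 * s.card < n + 2 → (quadProd s a b c - quadProd s a b 0).coeff n = 0) ∧
      (∀ n, n + 2 = 2 * s.card →
        (quadProd s a b c - quadProd s a b 0).coeff n = - ∑ i ∈ s, c i) := by
  induction s using Finset.induction_on with
  | empty => simp [quadProd]
  | insert k s hk ih =>
    obtain ⟨h0, h1⟩ := ih
    obtain ⟨p0, p1⟩ := quadProd_coeff s a b c
    have hrec : quadProd (insert k s) a b c - quadProd (insert k s) a b 0 =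
        ((Polynomial.X - Polynomial.C (a k)) * (Polynomial.X + Polynomial.C (b k))
          - Polynomial.C 0) * (quadProd s a b c - quadProd s a b 0)
        - Polynomial.C (c k) * quadProd s a b c := by
      rw [quadProd_insert hk, quadProd_insert hk]
      simp only [Pi.zero_apply, Polynomial.C_0]
      ring
    rw [card_insert_of_notMem hk, sum_insert hk, hrec]
    refine ⟨fun n hn => ?_, fun n hn => ?_⟩
    · rcases s.eq_empty_or_nonempty with rfl | hs
      · simp only [quadProd, prod_empty, sub_self, mul_zero, zero_sub, Polynomial.coeff_neg,
          Polynomial.coeff_C_mul, Polynomial.coeff_one]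
        rw [if_neg (by simp at hn; omega)]
        simp
      · have := hs.card_pos
        obtain ⟨n, rfl⟩ : ∃ m, n = m + 2 := ⟨n - 2, by omega⟩
        rw [Polynomial.coeff_sub, coeff_quad_mul, Polynomial.coeff_C_mul, h0 n (by omega),
          h0 _ (by omega), h0 _ (by omega), p0 _ (by omega)]
        ring
    · obtain rfl : n = 2 * s.card := by omega
      rw [Polynomial.coeff_sub, Polynomial.coeff_C_mul, p1]
      rcases s.eq_empty_or_nonempty with rfl | hs
      · simp [quadProd]
      · have := hs.card_pos
        obtain ⟨n, hn⟩ : ∃ m, 2 * s.card = m + 2 := ⟨2 * s.card - 2, by omega⟩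
        rw [hn, coeff_quad_mul, h1 n (by omega), h0 _ (by omega), h0 _ (by omega)]
        ring

lemma quadProd_eval (s : Finset ℕ) (a b c : ℕ → ℚ) (z : ℚ) :
    (quadProd s a b c).eval z = ∏ j ∈ s, ((z - a j) * (z + b j) - c j) := by
  simp [quadProd, Polynomial.eval_prod]

/-- The factor by which the Frobenius weight changes when the arm `a i` is lowered by one. -/
noncomputable def armRatio (s : Finset ℕ) (a b : ℕ → ℚ) (i : ℕ) : ℚ :=
  a i * ((a i + b i + 1) / (a i + b i)) *
    ∏ j ∈ s.erase i, ((a j - a i + 1) / (a j - a i) * ((a i + b j + 1) / (a i + b j)))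

/-- The term at the node `a i` in Lagrange interpolation of `X * quadProd s a b c`, where
`c j = 1 + a j + b j`. This choice of `c` factors each quadratic as
`(X - a j - 1) * (X + b j + 1)`, which makes the term equal to an `armRatio`. -/
lemma lagrange_term_eq {s : Finset ℕ} {a b : ℕ → ℚ} {i : ℕ} (hi : i ∈ s) (c : ℕ → ℚ)
    (hc : ∀ j ∈ s, c j = 1 + a j + b j) :
    a i * (∏ j ∈ s, ((a i - a j) * (a i + b j) - c j)) /
      ((∏ j ∈ s.erase i, (a i - a j)) * ∏ j ∈ s, (a i + b j)) = - armRatio s a b i := by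
  have e1 : ∏ j ∈ s, ((a i - a j) * (a i + b j) - c j) =
      ∏ j ∈ s, ((a i - a j - 1) * (a i + b j + 1)) :=
    prod_congr rfl (fun j hj => by rw [hc j hj]; ring)
  rw [e1, ← mul_prod_erase s _ hi, ← mul_prod_erase s (fun j => a i + b j) hi, armRatio]
  have e2 : ∏ j ∈ s.erase i,
      ((a j - a i + 1) / (a j - a i) * ((a i + b j + 1) / (a i + b j))) =
      (∏ j ∈ s.erase i, ((a i - a j - 1) * (a i + b j + 1))) /
        ((∏ j ∈ s.erase i, (a i - a j)) * ∏ j ∈ s.erase i, (a i + b j)) := by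
    rw [← prod_mul_distrib, ← prod_div_distrib]
    refine prod_congr rfl (fun j _ => ?_)
    rw [div_mul_div_comm, ← neg_sub (a i) (a j), show -(a i - a j) + 1 = -(a i - a j - 1) by ring,
      neg_mul, neg_mul, neg_div_neg_eq]
  rw [e2]
  simp only [div_eq_mul_inv, mul_inv]
  ring

/-- The term at the node `-b i`; the arms and legs exchange their roles. -/
lemma lagrange_term_eq' {s : Finset ℕ} {a b : ℕ → ℚ} {i : ℕ} (hi : i ∈ s) (c : ℕ → ℚ)
    (hc : ∀ j ∈ s, c j = 1 + a j + b j) :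
    -b i * (∏ j ∈ s, ((-b i - a j) * (-b i + b j) - c j)) /
      ((∏ j ∈ s, (-b i - a j)) * ∏ j ∈ s.erase i, (-b i + b j)) = - armRatio s b a i := by
  have hpos := card_pos.2 ⟨i, hi⟩
  rw [← lagrange_term_eq hi c (fun j hj => by rw [hc j hj]; ring)]
  have f1 : ∏ j ∈ s, ((-b i - a j) * (-b i + b j) - c j) =
      ∏ j ∈ s, ((b i - b j) * (b i + a j) - c j) := prod_congr rfl (fun j _ => by ring)
  have f2 : ∏ j ∈ s, (-b i - a j) = (-1) ^ s.card * ∏ j ∈ s, (b i + a j) := by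
    rw [← prod_const, ← prod_mul_distrib]; exact prod_congr rfl (fun j _ => by ring)
  have f3 : ∏ j ∈ s.erase i, (-b i + b j) =
      (-1) ^ (s.erase i).card * ∏ j ∈ s.erase i, (b i - b j) := by
    rw [← prod_const, ← prod_mul_distrib]; exact prod_congr rfl (fun j _ => by ring)
  have f4 : (-1 : ℚ) ^ s.card * (-1) ^ (s.erase i).card = -1 := by
    rw [card_erase_of_mem hi, ← pow_add]
    exact Odd.neg_one_pow ⟨s.card - 1, by omega⟩
  rw [f1, f2, f3]
  rw [show (-1 : ℚ) ^ s.card * (∏ j ∈ s, (b i + a j)) *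
      ((-1) ^ (s.erase i).card * ∏ j ∈ s.erase i, (b i - b j)) =
      ((-1) ^ s.card * (-1) ^ (s.erase i).card) * ((∏ j ∈ s.erase i, (b i - b j)) *
        ∏ j ∈ s, (b i + a j)) by ring, f4, neg_one_mul, neg_mul, neg_div_neg_eq]

/-- The partial-fraction identity behind the branching rule, when no pair `a i`, `-b j` of nodes
coincides. -/
lemma sum_armRatio (s : Finset ℕ) (a b : ℕ → ℚ)
    (ha : Set.InjOn a s) (hb : Set.InjOn b s) (hab : ∀ i ∈ s, ∀ j ∈ s, a i + b j ≠ 0) :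
    ∑ i ∈ s, armRatio s a b i + ∑ i ∈ s, armRatio s b a i = ∑ i ∈ s, (a i + b i + 1) := by
  rcases s.eq_empty_or_nonempty with rfl | hs
  · simp
  have hpos := hs.card_pos
  set c : ℕ → ℚ := fun j => 1 + a j + b j with hc
  obtain ⟨h0, h1⟩ := quadProd_sub_coeff s a b c
  obtain ⟨m, hm⟩ : ∃ m, 2 * s.card = m + 2 := ⟨2 * s.card - 2, by omega⟩
  -- Interpolate `X * (∏ (q j - c j) - ∏ q j)`: the subtracted product lowers the degree below the
  -- number of nodes and vanishes at each of them.
  have key := coeff_eq_sum_two_families s s a b ha hb hab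
    (Polynomial.X * (quadProd s a b c - quadProd s a b 0)) (m + 1) (by omega) (by
      intro n hn
      obtain ⟨n, rfl⟩ : ∃ k, n = k + 1 := ⟨n - 1, by omega⟩
      rw [Polynomial.coeff_X_mul, h0 n (by omega)])
  rw [Polynomial.coeff_X_mul, h1 m (by omega)] at key
  have ez : ∀ i ∈ s, (quadProd s a b 0).eval (a i) = 0 := by
    intro i hi
    rw [quadProd_eval]
    exact prod_eq_zero hi (by simp)
  have ez' : ∀ i ∈ s, (quadProd s a b 0).eval (-b i) = 0 := by
    intro i hi
    rw [quadProd_eval]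
    exact prod_eq_zero hi (by simp)
  have t1 : ∀ i ∈ s, (Polynomial.X * (quadProd s a b c - quadProd s a b 0)).eval (a i) /
      ((∏ j ∈ s.erase i, (a i - a j)) * ∏ j ∈ s, (a i + b j)) = - armRatio s a b i := by
    intro i hi
    rw [Polynomial.eval_mul, Polynomial.eval_X, Polynomial.eval_sub, ez i hi, sub_zero,
      quadProd_eval, lagrange_term_eq hi c (fun j _ => rfl)]
  have t2 : ∀ i ∈ s, (Polynomial.X * (quadProd s a b c - quadProd s a b 0)).eval (-b i) /
      ((∏ j ∈ s, (-b i - a j)) * ∏ j ∈ s.erase i, (-b i + b j)) = - armRatio s b a i := by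
    intro i hi
    rw [Polynomial.eval_mul, Polynomial.eval_X, Polynomial.eval_sub, ez' i hi, sub_zero,
      quadProd_eval, lagrange_term_eq' hi c (fun j _ => rfl)]
  rw [sum_congr rfl t1, sum_congr rfl t2, sum_neg_distrib, sum_neg_distrib] at key
  have : ∑ i ∈ s, c i = ∑ i ∈ s, (a i + b i + 1) := sum_congr rfl (fun j _ => by simp [hc]; ring)
  linarith

/-- The partial-fraction identity in the degenerate case `a k = b k = 0`, where the nodes `a k` and
`-b k` coincide: the extra product is the residue at `0`, and accounts for the removal of the last
diagonal box. -/
lemma sum_armRatio_of_zero (s : Finset ℕ) (a b : ℕ → ℚ) (k : ℕ) (hk : k ∈ s)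
    (hak : a k = 0) (hbk : b k = 0)
    (ha : Set.InjOn a s) (hb : Set.InjOn b s) (ha0 : ∀ i ∈ s, 0 ≤ a i) (hb0 : ∀ i ∈ s, 0 ≤ b i) :
    ∑ i ∈ s.erase k, armRatio s a b i + ∑ i ∈ s.erase k, armRatio s b a i +
      ∏ j ∈ s.erase k, ((a j + 1) / a j * ((b j + 1) / b j)) = ∑ i ∈ s, (a i + b i + 1) := by
  have hpos := card_pos.2 ⟨k, hk⟩
  have hcard := card_erase_of_mem hk
  have ha1 : ∀ i ∈ s.erase k, 0 < a i := fun i hi =>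
    lt_of_le_of_ne (ha0 i (mem_of_mem_erase hi)) (fun h =>
      ne_of_mem_erase hi (ha (mem_of_mem_erase hi) hk (by rw [hak, ← h])))
  have hb1 : ∀ i ∈ s.erase k, 0 < b i := fun i hi =>
    lt_of_le_of_ne (hb0 i (mem_of_mem_erase hi)) (fun h =>
      ne_of_mem_erase hi (hb (mem_of_mem_erase hi) hk (by rw [hbk, ← h])))
  set c : ℕ → ℚ := fun j => 1 + a j + b j with hc
  obtain ⟨h0, h1⟩ := quadProd_sub_coeff s a b c
  obtain ⟨m, hm⟩ : ∃ m, 2 * s.card = m + 2 := ⟨2 * s.card - 2, by omega⟩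
  -- The node `-b k` is dropped, and with it the factor `X` of the non-degenerate case.
  have key := coeff_eq_sum_two_families s (s.erase k) a b ha
    (hb.mono (by exact_mod_cast erase_subset k s))
    (fun i hi j hj => by have := ha0 i hi; have := hb1 j hj; positivity)
    (quadProd s a b c - quadProd s a b 0) m (by omega) (fun n hn => h0 n (by omega))
  rw [h1 m (by omega), ← add_sum_erase s (fun i => Polynomial.eval (a i) _ / _) hk] at key
  have ez : ∀ i ∈ s, (quadProd s a b 0).eval (a i) = 0 := by
    intro i hi
    rw [quadProd_eval]
    exact prod_eq_zero hi (by simp)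
  have ez' : ∀ i ∈ s, (quadProd s a b 0).eval (-b i) = 0 := by
    intro i hi
    rw [quadProd_eval]
    exact prod_eq_zero hi (by simp)
  have t0 : (quadProd s a b c - quadProd s a b 0).eval (a k) /
      ((∏ j ∈ s.erase k, (a k - a j)) * ∏ j ∈ s.erase k, (a k + b j)) =
      - ∏ j ∈ s.erase k, ((a j + 1) / a j * ((b j + 1) / b j)) := by
    rw [Polynomial.eval_sub, ez k hk, sub_zero, quadProd_eval, ← mul_prod_erase s _ hk,
      ← prod_mul_distrib, mul_div_assoc, ← prod_div_distrib]
    have : (a k - a k) * (a k + b k) - c k = -1 := by simp [hc, hak, hbk]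
    rw [this, neg_one_mul]
    congr 1
    refine prod_congr rfl (fun j hj => ?_)
    have := (ha1 j hj).ne'
    have := (hb1 j hj).ne'
    simp only [hak, hc, zero_add, zero_sub]
    field_simp
    ring
  have t1 : ∀ i ∈ s.erase k, (quadProd s a b c - quadProd s a b 0).eval (a i) /
      ((∏ j ∈ s.erase i, (a i - a j)) * ∏ j ∈ s.erase k, (a i + b j)) = - armRatio s a b i := by
    intro i hi
    have hi' := mem_of_mem_erase hi
    rw [Polynomial.eval_sub, ez i hi', sub_zero, quadProd_eval,
      ← lagrange_term_eq hi' c (fun j _ => rfl), ← mul_prod_erase s (fun j => a i + b j) hk, hbk,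
      add_zero, mul_left_comm, mul_div_mul_left _ _ (ha1 i hi).ne']
  have t2 : ∀ i ∈ s.erase k, (quadProd s a b c - quadProd s a b 0).eval (-b i) /
      ((∏ j ∈ s, (-b i - a j)) * ∏ j ∈ (s.erase k).erase i, (-b i + b j)) =
        - armRatio s b a i := by
    intro i hi
    have hi' := mem_of_mem_erase hi
    have hki : k ∈ s.erase i := mem_erase.2 ⟨(ne_of_mem_erase hi).symm, hk⟩
    rw [Polynomial.eval_sub, ez' i hi', sub_zero, quadProd_eval,
      ← lagrange_term_eq' hi' c (fun j _ => rfl),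
      ← mul_prod_erase (s.erase i) (fun j => -b i + b j) hki, hbk,
      add_zero, mul_left_comm, mul_div_mul_left _ _ (neg_ne_zero.2 (hb1 i hi).ne'),
      erase_right_comm]
  rw [t0, sum_congr rfl t1, sum_congr rfl t2, sum_neg_distrib, sum_neg_distrib] at key
  have : ∑ i ∈ s, c i = ∑ i ∈ s, (a i + b i + 1) := sum_congr rfl (fun j _ => by simp [hc]; ring)
  linarith

/-! ### The product in Frobenius' formula -/

/-- The contribution of a single pair `p = (arm, leg)` of Frobenius coordinates to Frobenius'
formula. -/
noncomputable def frobG (p : ℕ × ℕ) : ℚ :=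
  1 / ((p.1.factorial : ℚ) * (p.2.factorial : ℚ) * (p.1 + p.2 + 1))

/-- The interaction factor of two pairs of Frobenius coordinates in Frobenius' formula; it is
symmetric in `p` and `q`. -/
noncomputable def frobK (p q : ℕ × ℕ) : ℚ :=
  ((p.1 : ℚ) - q.1) * ((p.2 : ℚ) - q.2) / (((p.1 : ℚ) + q.2 + 1) * ((q.1 : ℚ) + p.2 + 1))

/-- Frobenius' product for the first `d` of the coordinate pairs `x`. When `x` lists the Frobenius
coordinates of a diagram with `n` boxes, this is the number of standard tableaux over `n!`. -/
noncomputable def frobW (d : ℕ) (x : ℕ → ℕ × ℕ) : ℚ :=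
  ∏ i ∈ range d, (frobG (x i) * ∏ j ∈ range i, frobK (x j) (x i))

lemma frobK_comm (p q : ℕ × ℕ) : frobK p q = frobK q p := by
  unfold frobK
  congr 1 <;> ring

lemma frobG_swap (p : ℕ × ℕ) : frobG p.swap = frobG p := by
  simp only [frobG, Prod.fst_swap, Prod.snd_swap]
  congr 1; ring

lemma frobK_swap (p q : ℕ × ℕ) : frobK p.swap q.swap = frobK p q := by
  simp only [frobK, Prod.fst_swap, Prod.snd_swap]
  congr 1 <;> ring

lemma frobG_pos (p : ℕ × ℕ) : 0 < frobG p := by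
  unfold frobG
  have := Nat.factorial_pos p.1
  have := Nat.factorial_pos p.2
  positivity

lemma frobK_pos {p q : ℕ × ℕ} (h1 : q.1 < p.1) (h2 : q.2 < p.2) : 0 < frobK p q := by
  unfold frobK
  have h1' : (0 : ℚ) < p.1 - q.1 := sub_pos.2 (by exact_mod_cast h1)
  have h2' : (0 : ℚ) < p.2 - q.2 := sub_pos.2 (by exact_mod_cast h2)
  positivity

lemma frobK_ne_zero {p q : ℕ × ℕ} (h1 : p.1 ≠ q.1) (h2 : p.2 ≠ q.2) : frobK p q ≠ 0 := by
  unfold frobK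
  have h1' : (p.1 : ℚ) - q.1 ≠ 0 := sub_ne_zero.2 (by exact_mod_cast h1)
  have h2' : (p.2 : ℚ) - q.2 ≠ 0 := sub_ne_zero.2 (by exact_mod_cast h2)
  have : (0 : ℚ) < ((p.1 : ℚ) + q.2 + 1) * ((q.1 : ℚ) + p.2 + 1) := by positivity
  exact div_ne_zero (mul_ne_zero h1' h2') this.ne'

lemma frobW_congr {d : ℕ} {x y : ℕ → ℕ × ℕ} (h : ∀ i < d, x i = y i) : frobW d x = frobW d y := by
  refine prod_congr rfl (fun i hi => ?_)
  have hi' := mem_range.1 hi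
  rw [h i hi']
  congr 1
  exact prod_congr rfl (fun j hj => by rw [h j ((mem_range.1 hj).trans hi')])

/-- Effect of replacing the pair `x k` by `v`: only the factors involving `k` change. The identity
is cross-multiplied, so that vanishing factors need no separate treatment. -/
lemma frobW_update {d k : ℕ} (hk : k < d) (x : ℕ → ℕ × ℕ) (v : ℕ × ℕ) :
    frobW d (Function.update x k v) *
        (frobG (x k) * ∏ j ∈ (range d).erase k, frobK (x j) (x k)) =
      frobW d x * (frobG v * ∏ j ∈ (range d).erase k, frobK (x j) v) := by
  induction d with
  | zero => omega
  | succ d ih =>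
    have hs : ∀ y, frobW (d + 1) y = frobW d y * (frobG (y d) * ∏ j ∈ range d, frobK (y j) (y d)) :=
      fun y => prod_range_succ _ _
    rw [hs, hs]
    rcases Nat.lt_succ_iff_lt_or_eq.1 hk with hk' | rfl
    · have ih := ih hk'
      have e : (range (d + 1)).erase k = insert d ((range d).erase k) := by
        ext j; simp only [mem_erase, mem_range, mem_insert]; omega
      have hd : d ∉ (range d).erase k := by simp
      rw [e, prod_insert hd, prod_insert hd, Function.update_of_ne (by omega : d ≠ k),
        ← mul_prod_erase (range d) _ (mem_range.2 hk'), Function.update_self,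
        ← mul_prod_erase (range d) (fun j => frobK (x j) (x d)) (mem_range.2 hk')]
      have e2 : ∏ j ∈ (range d).erase k, frobK (Function.update x k v j) (x d) =
          ∏ j ∈ (range d).erase k, frobK (x j) (x d) :=
        prod_congr rfl (fun j hj => by rw [Function.update_of_ne (ne_of_mem_erase hj)])
      rw [e2, frobK_comm (x d) (x k), frobK_comm (x d) v]
      linear_combination (frobG (x d) * frobK v (x d) * frobK (x k) (x d) *
        ∏ j ∈ (range d).erase k, frobK (x j) (x d)) * ih
    · have e : (range (k + 1)).erase k = range k := by
        ext j; simp only [mem_erase, mem_range]; omega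
      have e1 : frobW k (Function.update x k v) = frobW k x :=
        frobW_congr (fun i hi => Function.update_of_ne hi.ne _ _)
      have e2 : ∏ j ∈ range k, frobK (Function.update x k v j) v = ∏ j ∈ range k, frobK (x j) v :=
        prod_congr rfl (fun j hj => by rw [Function.update_of_ne (mem_range.1 hj).ne])
      rw [e, Function.update_self, e1, e2]
      ring

/-- Lowering the arm `x k` by one multiplies the weight by `armRatio`. -/
lemma frobW_lower_arm {d k : ℕ} (hk : k < d) (x : ℕ → ℕ × ℕ) (h0 : 1 ≤ (x k).1)
    (h1 : ∀ j < d, j ≠ k → (x j).1 ≠ (x k).1) (h2 : ∀ j < d, j ≠ k → (x j).2 ≠ (x k).2) :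
    frobW d (Function.update x k ((x k).1 - 1, (x k).2)) =
      frobW d x * armRatio (range d) (fun j => ((x j).1 : ℚ)) (fun j => ((x j).2 : ℚ)) k := by
  have key := frobW_update hk x ((x k).1 - 1, (x k).2)
  have hG : frobG ((x k).1 - 1, (x k).2) = frobG (x k) *
      ((x k).1 * ((((x k).1 : ℚ) + (x k).2 + 1) / ((x k).1 + (x k).2))) := by
    obtain ⟨m, hm⟩ : ∃ m, (x k).1 = m + 1 := ⟨(x k).1 - 1, by omega⟩
    have := Nat.factorial_ne_zero m
    have := Nat.factorial_ne_zero (x k).2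
    have h3 : (0 : ℚ) < (m : ℚ) + 1 + (x k).2 := by positivity
    have h4 : (0 : ℚ) < (m : ℚ) + 1 + (x k).2 + 1 := by positivity
    simp only [frobG, hm, Nat.add_sub_cancel, Nat.factorial_succ]
    push_cast
    rw [show (m : ℚ) + (x k).2 + 1 = m + 1 + (x k).2 by ring]
    field_simp
  have hK : ∀ j ∈ (range d).erase k, frobK (x j) ((x k).1 - 1, (x k).2) = frobK (x j) (x k) *
      ((((x j).1 : ℚ) - (x k).1 + 1) / ((x j).1 - (x k).1) *
        ((((x k).1 : ℚ) + (x j).2 + 1) / ((x k).1 + (x j).2))) := by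
    intro j hj
    obtain ⟨hjk, hj⟩ := mem_erase.1 hj
    have n1 : ((x j).1 : ℚ) - (x k).1 ≠ 0 :=
      sub_ne_zero.2 (by exact_mod_cast h1 j (mem_range.1 hj) hjk)
    obtain ⟨m, hm⟩ : ∃ m, (x k).1 = m + 1 := ⟨(x k).1 - 1, by omega⟩
    simp only [frobK, hm, Nat.add_sub_cancel]
    rw [hm] at n1
    push_cast at n1 ⊢
    have h3 : (0 : ℚ) < (m : ℚ) + 1 + (x j).2 := by positivity
    have h4 : (0 : ℚ) < (m : ℚ) + 1 + (x j).2 + 1 := by positivity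
    have h5 : (0 : ℚ) < (x j).1 + (x k).2 + 1 := by positivity
    rw [show (m : ℚ) + (x j).2 + 1 = m + 1 + (x j).2 by ring]
    field_simp
    ring
  have hne : frobG (x k) * ∏ j ∈ (range d).erase k, frobK (x j) (x k) ≠ 0 := by
    refine mul_ne_zero (frobG_pos _).ne' (prod_ne_zero_iff.2 (fun j hj => ?_))
    obtain ⟨hjk, hj⟩ := mem_erase.1 hj
    exact frobK_ne_zero (h1 j (mem_range.1 hj) hjk) (h2 j (mem_range.1 hj) hjk)
  rw [hG, prod_congr rfl hK, prod_mul_distrib] at key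
  apply mul_right_cancel₀ hne
  rw [key, armRatio]
  ring

/-! ### The branching rule for standard tableaux -/

namespace YoungDiagram

/-- Remove all boxes weakly below and to the right of `c`. For a corner `c` this removes just `c`. -/
def removeBox (μ : YoungDiagram) (c : ℕ × ℕ) : YoungDiagram where
  cells := μ.cells.filter (fun e => ¬ c ≤ e)
  isLowerSet := by
    intro e e' hle he
    simp only [coe_filter, Set.mem_ofPred_eq] at he ⊢
    exact ⟨μ.isLowerSet hle he.1, fun h => he.2 (h.trans hle)⟩

/-- The corners of `μ`: boxes with no box of `μ` directly below or to the right. -/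
def corners (μ : YoungDiagram) : Finset (ℕ × ℕ) :=
  μ.cells.filter (fun c => (c.1 + 1, c.2) ∉ μ.cells ∧ (c.1, c.2 + 1) ∉ μ.cells)

lemma mem_corners {μ : YoungDiagram} {c : ℕ × ℕ} :
    c ∈ μ.corners ↔ c ∈ μ ∧ (c.1 + 1, c.2) ∉ μ ∧ (c.1, c.2 + 1) ∉ μ := by
  simp [corners]

lemma eq_of_mem_corners_of_le {μ : YoungDiagram} {c e : ℕ × ℕ} (hc : c ∈ μ.corners) (he : e ∈ μ)
    (h : c ≤ e) : e = c := by
  obtain ⟨_, h1, h2⟩ := mem_corners.1 hc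
  obtain ⟨ha, hb⟩ := h
  by_contra hne
  rcases ha.lt_or_eq with hlt | heq
  · exact h1 (μ.up_left_mem (Nat.succ_le_of_lt hlt) hb he)
  · rcases hb.lt_or_eq with hlt | heq'
    · exact h2 (μ.up_left_mem ha (Nat.succ_le_of_lt hlt) he)
    · exact hne (Prod.ext heq.symm heq'.symm)

lemma mem_removeBox {μ : YoungDiagram} {c e : ℕ × ℕ} (hc : c ∈ μ.corners) :
    e ∈ μ.removeBox c ↔ e ∈ μ ∧ e ≠ c := by
  rw [← mem_cells]
  simp only [removeBox, mem_filter, mem_cells]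
  refine and_congr_right (fun he => not_congr ⟨eq_of_mem_corners_of_le hc he, ?_⟩)
  rintro rfl; exact le_rfl

lemma card_removeBox {μ : YoungDiagram} {c : ℕ × ℕ} (hc : c ∈ μ.corners) :
    (μ.removeBox c).card + 1 = μ.card := by
  have : (μ.removeBox c).cells = μ.cells.erase c := by
    ext e
    rw [mem_cells, mem_removeBox hc, mem_erase, mem_cells, and_comm]
  rw [YoungDiagram.card, this]
  exact card_erase_add_one (mem_corners.1 hc).1

end YoungDiagram

open YoungDiagram

instance finite_SYT (μ : YoungDiagram) : Finite {T : ℕ × ℕ → ℕ // IsSYT μ T} := by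
  refine Finite.of_injective (β := μ.cells → Fin (μ.card + 1))
    (fun T e => ⟨T.1 e.1, Nat.lt_succ_of_le (T.2.2.1 e.1 e.2).2⟩) ?_
  intro T T' h
  ext e
  by_cases he : e ∈ μ
  · exact congrArg Fin.val (congrFun h ⟨e, he⟩)
  · rw [T.2.1 e he, T'.2.1 e he]

/-- A standard tableau of `μ` minus a corner extends to one of `μ` by putting the largest entry into
that corner. -/
lemma isSYT_update {μ : YoungDiagram} {c : ℕ × ℕ} (hc : c ∈ μ.corners) {T : ℕ × ℕ → ℕ}
    (hT : IsSYT (μ.removeBox c) T) : IsSYT μ (Function.update T c μ.card) := by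
  obtain ⟨h0, h1, h2, h3, h4⟩ := hT
  have hcard := card_removeBox hc
  have hmem := (mem_corners.1 hc).1
  have hval : ∀ e ∈ μ, e ≠ c → 1 ≤ T e ∧ T e < μ.card := fun e he hne => by
    have := h1 e ((mem_removeBox hc).2 ⟨he, hne⟩)
    omega
  -- Both monotonicity conditions are instances of this one for boxes `e ≤ e'`.
  have hmono : ∀ e e' : ℕ × ℕ, e ≤ e' → e ≠ e' → e' ∈ μ → (e' ≠ c → T e < T e') →
      Function.update T c μ.card e < Function.update T c μ.card e' := by
    intro e e' hle hne he' h
    have he : e ∈ μ := μ.up_left_mem hle.1 hle.2 he'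
    have hec : e ≠ c := by
      rintro rfl
      exact hne (eq_of_mem_corners_of_le hc he' hle).symm
    rw [Function.update_of_ne hec]
    by_cases hec' : e' = c
    · rw [hec', Function.update_self]
      exact (hval e he hec).2
    · rw [Function.update_of_ne hec']
      exact h hec'
  refine ⟨?_, ?_, ?_, ?_, ?_⟩
  · intro e he
    have hne : e ≠ c := by rintro rfl; exact he hmem
    rw [Function.update_of_ne hne]
    exact h0 e (fun h => he ((mem_removeBox hc).1 h).1)
  · intro e he
    by_cases hne : e = c
    · rw [hne, Function.update_self]; omega
    · rw [Function.update_of_ne hne]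
      have := hval e he hne
      omega
  · intro e he e' he' h
    rw [mem_coe, mem_cells] at he he'
    by_cases hec : e = c <;> by_cases hec' : e' = c
    · rw [hec, hec']
    · rw [hec, Function.update_self, Function.update_of_ne hec'] at h
      have := hval e' he' hec'
      omega
    · rw [hec', Function.update_self, Function.update_of_ne hec] at h
      have := hval e he hec
      omega
    · rw [Function.update_of_ne hec, Function.update_of_ne hec'] at h
      exact h2 ((mem_removeBox hc).2 ⟨he, hec⟩) ((mem_removeBox hc).2 ⟨he', hec'⟩) h
  · intro i j₁ j₂ hj he
    exact hmono _ _ ⟨le_rfl, hj.le⟩ (by simp [hj.ne]) he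
      (fun hne => h3 i j₁ j₂ hj ((mem_removeBox hc).2 ⟨he, hne⟩))
  · intro i₁ i₂ j hi he
    exact hmono _ _ ⟨hi.le, le_rfl⟩ (by simp [hi.ne]) he
      (fun hne => h4 i₁ i₂ j hi ((mem_removeBox hc).2 ⟨he, hne⟩))

/-- The largest entry of a standard tableau sits in a corner, and deleting it leaves a standard
tableau. -/
lemma exists_corner_of_isSYT {μ : YoungDiagram} (hμ : μ.card ≠ 0) {T : ℕ × ℕ → ℕ}
    (hT : IsSYT μ T) : ∃ c ∈ μ.corners, T c = μ.card ∧
      IsSYT (μ.removeBox c) (Function.update T c 0) := by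
  obtain ⟨h0, h1, h2, h3, h4⟩ := hT
  have hsurj : Set.SurjOn T μ.cells (Icc 1 μ.card : Finset ℕ) := by
    refine surjOn_of_injOn_of_card_le T (fun e he => ?_) h2 (by simp [YoungDiagram.card])
    simpa using h1 e he
  obtain ⟨c, hc, hTc⟩ := hsurj (mem_coe.2 (mem_Icc.2 ⟨Nat.one_le_iff_ne_zero.2 hμ, le_rfl⟩))
  rw [mem_coe, mem_cells] at hc
  have hcor : c ∈ μ.corners := by
    refine mem_corners.2 ⟨hc, fun h => ?_, fun h => ?_⟩
    · have := h4 c.1 (c.1 + 1) c.2 (by omega) h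
      have := (h1 _ h).2
      simp only [Prod.mk.eta] at *
      omega
    · have := h3 c.1 c.2 (c.2 + 1) (by omega) h
      have := (h1 _ h).2
      simp only [Prod.mk.eta] at *
      omega
  have hcard := card_removeBox hcor
  refine ⟨c, hcor, hTc, ?_, ?_, ?_, ?_, ?_⟩
  · intro e he
    by_cases hec : e = c
    · rw [hec, Function.update_self]
    · rw [Function.update_of_ne hec]
      exact h0 e (fun h => he ((mem_removeBox hcor).2 ⟨h, hec⟩))
  · intro e he
    obtain ⟨he, hec⟩ := (mem_removeBox hcor).1 he
    rw [Function.update_of_ne hec]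
    have := h1 e he
    have : T e ≠ μ.card := fun h => hec (h2 he hc (by rw [h, hTc]))
    omega
  · intro e he e' he' h
    obtain ⟨he, hec⟩ := (mem_removeBox hcor).1 he
    obtain ⟨he', hec'⟩ := (mem_removeBox hcor).1 he'
    rw [Function.update_of_ne hec, Function.update_of_ne hec'] at h
    exact h2 he he' h
  · intro i j₁ j₂ hj he
    have h1 := (mem_removeBox hcor).1 he
    have h1' := (mem_removeBox hcor).1 ((μ.removeBox c).up_left_mem le_rfl hj.le he)
    rw [Function.update_of_ne h1.2, Function.update_of_ne h1'.2]
    exact h3 i j₁ j₂ hj h1.1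
  · intro i₁ i₂ j hi he
    have h1 := (mem_removeBox hcor).1 he
    have h1' := (mem_removeBox hcor).1 ((μ.removeBox c).up_left_mem hi.le le_rfl he)
    rw [Function.update_of_ne h1.2, Function.update_of_ne h1'.2]
    exact h4 i₁ i₂ j hi h1.1

/-- The branching rule. -/
lemma dimYD_eq_sum_corners {μ : YoungDiagram} (hμ : μ.card ≠ 0) :
    dimYD μ = ∑ c ∈ μ.corners, dimYD (μ.removeBox c) := by
  let f : (Σ c : μ.corners, {T : ℕ × ℕ → ℕ // IsSYT (μ.removeBox c) T}) →
      {T : ℕ × ℕ → ℕ // IsSYT μ T} := fun p =>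
    ⟨Function.update p.2.1 p.1.1 μ.card, isSYT_update p.1.2 p.2.2⟩
  have hf : Function.Bijective f := by
    constructor
    · rintro ⟨⟨c, hc⟩, ⟨T, hT⟩⟩ ⟨⟨c', hc'⟩, ⟨T', hT'⟩⟩ h
      have h : Function.update T c μ.card = Function.update T' c' μ.card := congrArg Subtype.val h
      have hcc : c = c' := by
        have hs := isSYT_update hc' hT'
        refine hs.2.2.1 (mem_corners.1 hc).1 (mem_corners.1 hc').1 ?_
        rw [← h, Function.update_self, h, Function.update_self]
      subst hcc
      have hTT : T = T' := by
        ext e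
        by_cases hec : e = c
        · rw [hT.1 e (fun h => ((mem_removeBox hc).1 h).2 hec),
            hT'.1 e (fun h => ((mem_removeBox hc).1 h).2 hec)]
        · simpa [hec] using congrFun h e
      subst hTT
      rfl
    · rintro ⟨T, hT⟩
      obtain ⟨c, hc, hTc, hs⟩ := exists_corner_of_isSYT hμ hT
      refine ⟨⟨⟨c, hc⟩, ⟨_, hs⟩⟩, Subtype.ext ?_⟩
      simp [f, ← hTc]
  rw [dimYD, ← Nat.card_eq_of_bijective f hf, Nat.card_sigma,
    ← sum_coe_sort μ.corners (fun c => dimYD (μ.removeBox c))]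
  rfl

lemma dimYD_eq_one {μ : YoungDiagram} (hμ : μ.card = 0) : dimYD μ = 1 := by
  have hne : ∀ c, c ∉ μ := fun c hc => by
    have : μ.cells = ∅ := card_eq_zero.1 hμ
    rw [← mem_cells, this] at hc
    simp at hc
  rw [dimYD, Nat.card_eq_one_iff_unique]
  refine ⟨⟨fun T T' => Subtype.ext (funext fun c => ?_)⟩,
    ⟨⟨fun _ => 0, fun _ _ => rfl, fun c hc => absurd hc (hne c), fun c hc => absurd hc (hne c),
      fun _ _ _ _ h => absurd h (hne _), fun _ _ _ _ h => absurd h (hne _)⟩⟩⟩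
  rw [T.2.1 c (hne c), T'.2.1 c (hne c)]

/-! ### Frobenius coordinates and Frobenius' formula -/

namespace YoungDiagram

lemma rowLen_eq_of {μ : YoungDiagram} {i m : ℕ} (h : ∀ j, (i, j) ∈ μ ↔ j < m) :
    μ.rowLen i = m := by
  have h1 := h m
  have h2 := h (μ.rowLen i)
  rw [mem_iff_lt_rowLen] at h1 h2
  omega

lemma colLen_eq_of {μ : YoungDiagram} {j m : ℕ} (h : ∀ i, (i, j) ∈ μ ↔ i < m) :
    μ.colLen j = m := by
  have h1 := h m
  have h2 := h (μ.colLen j)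
  rw [mem_iff_lt_colLen] at h1 h2
  omega

lemma exists_diag_notMem (μ : YoungDiagram) : ∃ i, (i, i) ∉ μ := by
  refine ⟨μ.rowLen 0, fun h => ?_⟩
  have := mem_iff_lt_rowLen.1 (μ.up_left_mem (Nat.zero_le _) le_rfl h)
  omega

open Classical in
/-- The number of diagonal boxes of `μ`. -/
noncomputable def durfee (μ : YoungDiagram) : ℕ := Nat.find μ.exists_diag_notMem

lemma lt_durfee {μ : YoungDiagram} {i : ℕ} : i < μ.durfee ↔ (i, i) ∈ μ := by
  classical
  constructor
  · intro h
    by_contra hn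
    exact Nat.find_min μ.exists_diag_notMem h hn
  · intro h
    by_contra hn
    have hn : μ.durfee ≤ i := by omega
    exact Nat.find_spec μ.exists_diag_notMem (μ.up_left_mem hn hn h)

lemma durfee_eq_of {μ : YoungDiagram} {m : ℕ} (h : ∀ i, (i, i) ∈ μ ↔ i < m) : μ.durfee = m := by
  have h1 := h m
  have h2 := h μ.durfee
  rw [← lt_durfee] at h1 h2
  omega

/-- The `i`-th pair of Frobenius coordinates (arm and leg of the `i`-th diagonal box). The
subtraction truncates unless `i < μ.durfee`; only such `i` are used. -/
def frob (μ : YoungDiagram) (i : ℕ) : ℕ × ℕ := (μ.rowLen i - (i + 1), μ.colLen i - (i + 1))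

lemma rowLen_eq_frob {μ : YoungDiagram} {i : ℕ} (hi : i < μ.durfee) :
    μ.rowLen i = (μ.frob i).1 + i + 1 := by
  have := mem_iff_lt_rowLen.1 (lt_durfee.1 hi)
  simp only [frob]; omega

lemma colLen_eq_frob {μ : YoungDiagram} {i : ℕ} (hi : i < μ.durfee) :
    μ.colLen i = (μ.frob i).2 + i + 1 := by
  have := mem_iff_lt_colLen.1 (lt_durfee.1 hi)
  simp only [frob]; omega

lemma frob_strictAnti {μ : YoungDiagram} {i j : ℕ} (hij : i < j) (hj : j < μ.durfee) :
    (μ.frob j).1 < (μ.frob i).1 ∧ (μ.frob j).2 < (μ.frob i).2 := by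
  have h1 := rowLen_eq_frob hj
  have h2 := rowLen_eq_frob (hij.trans hj)
  have h3 := colLen_eq_frob hj
  have h4 := colLen_eq_frob (hij.trans hj)
  have h5 := μ.rowLen_anti i j hij.le
  have h6 := μ.colLen_anti i j hij.le
  omega

lemma frob_ne {μ : YoungDiagram} {i j : ℕ} (hij : i ≠ j) (hi : i < μ.durfee)
    (hj : j < μ.durfee) : (μ.frob i).1 ≠ (μ.frob j).1 ∧ (μ.frob i).2 ≠ (μ.frob j).2 := by
  rcases hij.lt_or_gt with h | h
  · have := frob_strictAnti h hj; omega
  · have := frob_strictAnti h hi; omega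

/-- The boxes split into the hooks of the diagonal boxes. -/
lemma card_eq_sum_frob (μ : YoungDiagram) :
    μ.card = ∑ i ∈ range μ.durfee, ((μ.frob i).1 + (μ.frob i).2 + 1) := by
  rw [YoungDiagram.card, card_eq_sum_card_fiberwise (f := fun c : ℕ × ℕ => min c.1 c.2)
    (t := range μ.durfee)]
  · refine sum_congr rfl (fun i hi => ?_)
    have hi := mem_range.1 hi
    have e : μ.cells.filter (fun c => min c.1 c.2 = i) =
        (Ico i (μ.rowLen i)).image (fun j => (i, j)) ∪
          (Ico (i + 1) (μ.colLen i)).image (fun k => (k, i)) := by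
      ext ⟨k, l⟩
      simp only [mem_filter, mem_cells, mem_union, mem_image, mem_Ico, Prod.mk.injEq]
      constructor
      · rintro ⟨h, hm⟩
        rcases le_or_gt k l with hkl | hkl
        · rw [min_eq_left hkl] at hm
          subst hm
          exact Or.inl ⟨l, ⟨hkl, mem_iff_lt_rowLen.1 h⟩, rfl, rfl⟩
        · rw [min_eq_right hkl.le] at hm
          subst hm
          exact Or.inr ⟨k, ⟨hkl, mem_iff_lt_colLen.1 h⟩, rfl, rfl⟩
      · rintro (⟨j, ⟨h1, h2⟩, rfl, rfl⟩ | ⟨j, ⟨h1, h2⟩, rfl, rfl⟩)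
        · exact ⟨mem_iff_lt_rowLen.2 h2, by omega⟩
        · exact ⟨mem_iff_lt_colLen.2 h2, by omega⟩
    rw [e, card_union_of_disjoint, card_image_of_injective, card_image_of_injective]
    · simp only [Nat.card_Ico, rowLen_eq_frob hi, colLen_eq_frob hi]
      omega
    · intro a b h; simpa using h
    · intro a b h; simpa using h
    · rw [disjoint_left]
      rintro ⟨k, l⟩ h1 h2
      simp only [mem_image, mem_Ico, Prod.mk.injEq] at h1 h2
      omega
  · rintro ⟨k, l⟩ h
    rw [mem_coe, mem_cells] at h
    rw [mem_coe, mem_range, lt_durfee]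
    exact μ.up_left_mem (min_le_left _ _) (min_le_right _ _) h

/-- The value of `dimYD μ / μ.card!` predicted by Frobenius' formula. -/
noncomputable def weight (μ : YoungDiagram) : ℚ := frobW μ.durfee μ.frob

lemma durfee_transpose (μ : YoungDiagram) : μ.transpose.durfee = μ.durfee :=
  durfee_eq_of (fun i => by rw [mem_transpose, lt_durfee, Prod.swap_prod_mk])

lemma frob_transpose (μ : YoungDiagram) (i : ℕ) : μ.transpose.frob i = (μ.frob i).swap := by
  simp [frob]

lemma weight_transpose (μ : YoungDiagram) : μ.transpose.weight = μ.weight := by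
  simp only [weight, durfee_transpose, frobW, frob_transpose, frobG_swap, frobK_swap]

lemma transpose_removeBox (μ : YoungDiagram) (c : ℕ × ℕ) :
    (μ.removeBox c).transpose = μ.transpose.removeBox c.swap := by
  ext e
  simp [removeBox, transpose, Prod.le_def, and_comm]

lemma mem_corners_transpose {μ : YoungDiagram} {c : ℕ × ℕ} :
    c ∈ μ.transpose.corners ↔ c.swap ∈ μ.corners := by
  simp only [mem_corners, mem_transpose, Prod.swap_prod_mk, Prod.fst_swap, Prod.snd_swap]
  tauto

lemma weight_removeBox_upper {μ : YoungDiagram} {c : ℕ × ℕ} (hc : c ∈ μ.corners)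
    (hlt : c.1 < c.2) : c.1 < μ.durfee ∧ (μ.removeBox c).weight = μ.weight *
      armRatio (range μ.durfee) (fun j => ((μ.frob j).1 : ℚ)) (fun j => ((μ.frob j).2 : ℚ)) c.1 := by
  obtain ⟨i, j⟩ := c
  obtain ⟨hm, hd, hr⟩ := mem_corners.1 hc
  simp only at hlt hd hr ⊢
  have hi : i < μ.durfee := lt_durfee.2 (μ.up_left_mem le_rfl hlt.le hm)
  refine ⟨hi, ?_⟩
  have hrow : μ.rowLen i = j + 1 := by
    rw [mem_iff_lt_rowLen] at hm hr; omega
  have hfi := rowLen_eq_frob hi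
  have hj : μ.durfee ≤ j := by
    by_contra h
    exact hd (μ.up_left_mem (Nat.succ_le_of_lt hlt) le_rfl (lt_durfee.1 (not_le.1 h)))
  have hdur : (μ.removeBox (i, j)).durfee = μ.durfee := durfee_eq_of (fun k => by
    rw [mem_removeBox hc, lt_durfee]
    simp only [ne_eq, Prod.mk.injEq, and_iff_left_iff_imp]
    omega)
  rw [weight, hdur, weight, ← frobW_lower_arm hi μ.frob (by omega)
    (fun k hk hne => (frob_ne hne hk hi).1) (fun k hk hne => (frob_ne hne hk hi).2)]
  refine frobW_congr (fun k hk => ?_)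
  have hcol : (μ.removeBox (i, j)).colLen k = μ.colLen k := colLen_eq_of (fun l => by
    rw [mem_removeBox hc, mem_iff_lt_colLen]
    simp only [ne_eq, Prod.mk.injEq, and_iff_left_iff_imp]
    omega)
  by_cases hki : k = i
  · subst hki
    have : (μ.removeBox (k, j)).rowLen k = j := rowLen_eq_of (fun l => by
      rw [mem_removeBox hc, mem_iff_lt_rowLen]
      simp only [ne_eq, Prod.mk.injEq, true_and]
      omega)
    rw [Function.update_self, frob, this, hcol]
    ext <;> simp only [frob]
    omega
  · have : (μ.removeBox (i, j)).rowLen k = μ.rowLen k := rowLen_eq_of (fun l => by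
      rw [mem_removeBox hc, mem_iff_lt_rowLen]
      simp only [ne_eq, Prod.mk.injEq, and_iff_left_iff_imp]
      omega)
    rw [Function.update_of_ne hki, frob, this, hcol, frob]

/-- The corners above the diagonal are exactly the rows whose arm may be lowered; for the remaining
rows the factor `armRatio` vanishes. -/
lemma sum_upper_corners (μ : YoungDiagram) :
    ∑ c ∈ μ.corners.filter (fun c => c.1 < c.2), (μ.removeBox c).weight =
      μ.weight * ∑ i ∈ range μ.durfee, armRatio (range μ.durfee)
        (fun j => ((μ.frob j).1 : ℚ)) (fun j => ((μ.frob j).2 : ℚ)) i := by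
  have hinj : Set.InjOn Prod.fst
      ((μ.corners.filter (fun c => c.1 < c.2) : Finset (ℕ × ℕ)) : Set (ℕ × ℕ)) := by
    rintro ⟨i, j⟩ h ⟨i', j'⟩ h' (rfl : i = i')
    obtain ⟨h1, -, h2⟩ := mem_corners.1 (mem_filter.1 h).1
    obtain ⟨h1', -, h2'⟩ := mem_corners.1 (mem_filter.1 h').1
    rw [mem_iff_lt_rowLen] at h1 h2 h1' h2'
    dsimp only at h1 h2 h1' h2'
    simp only [Prod.mk.injEq, true_and]
    omega
  rw [sum_congr rfl (fun c hc => (weight_removeBox_upper (mem_filter.1 hc).1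
    (mem_filter.1 hc).2).2), ← mul_sum]
  congr 1
  rw [← sum_image (f := fun i => armRatio (range μ.durfee)
    (fun j => ((μ.frob j).1 : ℚ)) (fun j => ((μ.frob j).2 : ℚ)) i) hinj]
  refine sum_subset ?_ ?_
  · intro i hi
    obtain ⟨c, hc, rfl⟩ := mem_image.1 hi
    exact mem_range.2 (weight_removeBox_upper (mem_filter.1 hc).1 (mem_filter.1 hc).2).1
  · intro i hi hni
    have hi := mem_range.1 hi
    have hfi := rowLen_eq_frob hi
    rcases Nat.eq_zero_or_pos (μ.frob i).1 with h0 | h0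
    · simp [armRatio, h0]
    · have hbelow : (i + 1, i + (μ.frob i).1) ∈ μ := by
        by_contra hn
        refine hni (mem_image.2 ⟨(i, i + (μ.frob i).1), mem_filter.2
          ⟨mem_corners.2 ⟨mem_iff_lt_rowLen.2 (by omega), hn, fun h => ?_⟩, by simp; omega⟩, rfl⟩)
        have := mem_iff_lt_rowLen.1 h
        dsimp only at this
        omega
      have hi1 : i + 1 < μ.durfee := lt_durfee.2 (μ.up_left_mem le_rfl (by omega) hbelow)
      have h1 := rowLen_eq_frob hi1
      have h2 := mem_iff_lt_rowLen.1 hbelow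
      have h3 := (frob_strictAnti (Nat.lt_succ_self i) hi1).1
      have h4 : (μ.frob i).1 = (μ.frob (i + 1)).1 + 1 := by
        simp only [Nat.succ_eq_add_one] at h3; omega
      rw [armRatio, prod_eq_zero (i := i + 1), mul_zero]
      · simp [hi1]
      · rw [h4]; push_cast; simp

lemma sum_lower_corners (μ : YoungDiagram) :
    ∑ c ∈ μ.corners.filter (fun c => c.2 < c.1), (μ.removeBox c).weight =
      μ.weight * ∑ i ∈ range μ.durfee, armRatio (range μ.durfee)
        (fun j => ((μ.frob j).2 : ℚ)) (fun j => ((μ.frob j).1 : ℚ)) i := by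
  have h := sum_upper_corners μ.transpose
  simp only [weight_transpose, durfee_transpose, frob_transpose, Prod.fst_swap,
    Prod.snd_swap] at h
  rw [← h]
  refine sum_nbij' Prod.swap Prod.swap ?_ ?_ ?_ ?_ ?_
  · intro c hc
    simpa [mem_corners_transpose] using hc
  · intro c hc
    simpa [mem_corners_transpose] using hc
  · simp
  · simp
  · intro c _
    rw [← transpose_removeBox, weight_transpose]

/-- If the last diagonal box is a corner, deleting it drops the last pair `(0, 0)` of Frobenius
coordinates. -/
lemma weight_removeBox_diag {μ : YoungDiagram} {k : ℕ} (hk : μ.durfee = k + 1)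
    (h0 : μ.frob k = (0, 0)) : (k, k) ∈ μ.corners ∧ (μ.removeBox (k, k)).weight = μ.weight *
      ∏ j ∈ (range μ.durfee).erase k, ((((μ.frob j).1 : ℚ) + 1) / (μ.frob j).1 *
        ((((μ.frob j).2 : ℚ) + 1) / (μ.frob j).2)) := by
  have hkd : k < μ.durfee := by omega
  have hr := rowLen_eq_frob hkd
  have hl := colLen_eq_frob hkd
  simp only [h0] at hr hl
  have hc : (k, k) ∈ μ.corners := by
    refine mem_corners.2 ⟨lt_durfee.1 hkd, fun h => ?_, fun h => ?_⟩
    · rw [mem_iff_lt_colLen] at h; simp only at h; omega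
    · rw [mem_iff_lt_rowLen] at h; simp only at h; omega
  refine ⟨hc, ?_⟩
  have hdur : (μ.removeBox (k, k)).durfee = k := durfee_eq_of (fun i => by
    rw [mem_removeBox hc, ← lt_durfee]
    simp only [ne_eq, Prod.mk.injEq]
    omega)
  have e : (range μ.durfee).erase k = range k := by
    ext j; simp only [mem_erase, mem_range]; omega
  have hfr : frobW k (μ.removeBox (k, k)).frob = frobW k μ.frob := frobW_congr (fun i hi => by
    have h1 : (μ.removeBox (k, k)).rowLen i = μ.rowLen i := rowLen_eq_of (fun l => by
      rw [mem_removeBox hc, mem_iff_lt_rowLen]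
      simp only [ne_eq, Prod.mk.injEq, and_iff_left_iff_imp]
      omega)
    have h2 : (μ.removeBox (k, k)).colLen i = μ.colLen i := colLen_eq_of (fun l => by
      rw [mem_removeBox hc, mem_iff_lt_colLen]
      simp only [ne_eq, Prod.mk.injEq, and_iff_left_iff_imp]
      omega)
    rw [frob, h1, h2, frob])
  have hW : μ.weight = frobW k μ.frob * (frobG (μ.frob k) * ∏ j ∈ range k,
      frobK (μ.frob j) (μ.frob k)) := by
    rw [weight, hk]; exact prod_range_succ _ _
  have hG : frobG (0, 0) = 1 := by simp [frobG]
  rw [weight, hdur, hfr, e, hW, h0, hG, one_mul, mul_assoc, ← prod_mul_distrib, prod_eq_one,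
    mul_one]
  intro j hj
  have hj := mem_range.1 hj
  have := frob_strictAnti hj hkd
  rw [h0] at this
  have h1 : ((μ.frob j).1 : ℚ) ≠ 0 := by exact_mod_cast this.1.ne'
  have h2 : ((μ.frob j).2 : ℚ) ≠ 0 := by exact_mod_cast this.2.ne'
  have h3 : ((μ.frob j).1 : ℚ) + 1 ≠ 0 := by positivity
  have h4 : ((μ.frob j).2 : ℚ) + 1 ≠ 0 := by positivity
  simp only [frobK, Nat.cast_zero, sub_zero, add_zero, zero_add]
  field_simp

/-- The weight satisfies the branching rule. -/
lemma sum_corners_weight (μ : YoungDiagram) :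
    ∑ c ∈ μ.corners, (μ.removeBox c).weight = μ.card * μ.weight := by
  have hsplit : ∑ c ∈ μ.corners, (μ.removeBox c).weight =
      ∑ c ∈ μ.corners.filter (fun c => c.1 < c.2), (μ.removeBox c).weight +
      ∑ c ∈ μ.corners.filter (fun c => c.2 < c.1), (μ.removeBox c).weight +
      ∑ c ∈ μ.corners.filter (fun c => c.1 = c.2), (μ.removeBox c).weight := by
    simp only [sum_filter]
    rw [← sum_add_distrib, ← sum_add_distrib]
    refine sum_congr rfl (fun c _ => ?_)
    rcases lt_trichotomy c.1 c.2 with h | h | h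
    · simp [h, h.ne, h.not_gt]
    · simp [h]
    · simp [h, h.ne', h.not_gt]
  have hcard : (μ.card : ℚ) =
      ∑ i ∈ range μ.durfee, (((μ.frob i).1 : ℚ) + (μ.frob i).2 + 1) := by
    rw [card_eq_sum_frob]; push_cast; rfl
  have ha : Set.InjOn (fun j => ((μ.frob j).1 : ℚ)) (range μ.durfee : Finset ℕ) := by
    intro i hi j hj h
    by_contra hne
    exact (frob_ne hne (by simpa using hi) (by simpa using hj)).1 (Nat.cast_injective h)
  have hb : Set.InjOn (fun j => ((μ.frob j).2 : ℚ)) (range μ.durfee : Finset ℕ) := by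
    intro i hi j hj h
    by_contra hne
    exact (frob_ne hne (by simpa using hi) (by simpa using hj)).2 (Nat.cast_injective h)
  rw [hsplit, sum_upper_corners, sum_lower_corners, hcard]
  by_cases hdiag : ∃ k, μ.durfee = k + 1 ∧ μ.frob k = (0, 0)
  · obtain ⟨k, hk, h0⟩ := hdiag
    obtain ⟨hc, hw⟩ := weight_removeBox_diag hk h0
    have hfil : μ.corners.filter (fun c => c.1 = c.2) = {(k, k)} := by
      ext ⟨i, j⟩
      simp only [mem_filter, mem_singleton, Prod.mk.injEq]
      constructor
      · rintro ⟨h, rfl⟩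
        have hi := lt_durfee.2 (mem_corners.1 h).1
        have := eq_of_mem_corners_of_le h (mem_corners.1 hc).1
          ⟨show i ≤ k by omega, show i ≤ k by omega⟩
        simp only [Prod.mk.injEq] at this
        omega
      · rintro ⟨rfl, rfl⟩
        exact ⟨hc, rfl⟩
    have hkr : k ∈ range μ.durfee := mem_range.2 (by omega)
    have hid := sum_armRatio_of_zero (range μ.durfee) (fun j => ((μ.frob j).1 : ℚ))
      (fun j => ((μ.frob j).2 : ℚ)) k hkr (by simp [h0]) (by simp [h0]) ha hb
      (fun i _ => Nat.cast_nonneg _) (fun i _ => Nat.cast_nonneg _)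
    rw [hfil, sum_singleton, hw, ← hid, ← add_sum_erase _ _ hkr, ← add_sum_erase _ _ hkr]
    have z1 : ∀ b, armRatio (range μ.durfee) (fun j => ((μ.frob j).1 : ℚ)) b k = 0 := by
      intro b; simp [armRatio, h0]
    have z2 : ∀ b, armRatio (range μ.durfee) (fun j => ((μ.frob j).2 : ℚ)) b k = 0 := by
      intro b; simp [armRatio, h0]
    rw [z1, z2]
    ring
  · have hab : ∀ i ∈ range μ.durfee, ∀ j ∈ range μ.durfee,
        ((μ.frob i).1 : ℚ) + (μ.frob j).2 ≠ 0 := by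
      intro i hi j hj h
      have hi := mem_range.1 hi
      have hj := mem_range.1 hj
      have h : (μ.frob i).1 + (μ.frob j).2 = 0 := by exact_mod_cast h
      obtain ⟨k, hk⟩ : ∃ k, μ.durfee = k + 1 := ⟨μ.durfee - 1, by omega⟩
      have hi' : i = k := by
        by_contra hne
        have := frob_strictAnti (show i < k by omega) (show k < μ.durfee by omega)
        omega
      have hj' : j = k := by
        by_contra hne
        have := frob_strictAnti (show j < k by omega) (show k < μ.durfee by omega)
        omega
      subst hi' hj'
      exact hdiag ⟨_, hk, Prod.ext (by simp; omega) (by simp; omega)⟩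
    have hfil : μ.corners.filter (fun c => c.1 = c.2) = ∅ := by
      rw [filter_eq_empty_iff]
      rintro ⟨i, j⟩ h (rfl : i = j)
      obtain ⟨h1, h2, h3⟩ := mem_corners.1 h
      have hi := lt_durfee.2 h1
      have hr := rowLen_eq_frob hi
      have hl := colLen_eq_frob hi
      rw [mem_iff_lt_colLen] at h2
      rw [mem_iff_lt_rowLen] at h3
      simp only at h2 h3
      exact hab i (mem_range.2 hi) i (mem_range.2 hi)
        (by rw [show (μ.frob i).1 = 0 by omega, show (μ.frob i).2 = 0 by omega]; simp)
    rw [hfil, sum_empty, add_zero, ← mul_add, sum_armRatio _ _ _ ha hb hab, mul_comm]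

end YoungDiagram

/-- Frobenius' formula for the number of standard tableaux. -/
lemma dimYD_eq_weight (μ : YoungDiagram) : (dimYD μ : ℚ) = (μ.card.factorial : ℚ) * μ.weight := by
  induction hn : μ.card generalizing μ with
  | zero =>
    have hd : μ.durfee = 0 := by
      by_contra h
      have := card_eq_zero.1 hn ▸ (mem_cells (0, 0)).2 (lt_durfee.1 (Nat.pos_of_ne_zero h))
      simp at this
    rw [dimYD_eq_one hn, weight, hd]
    simp [frobW]
  | succ n ih =>
    have hsum : ∀ c ∈ μ.corners, (dimYD (μ.removeBox c) : ℚ) =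
        (n.factorial : ℚ) * (μ.removeBox c).weight :=
      fun c hc => ih _ (by have := card_removeBox hc; omega)
    rw [dimYD_eq_sum_corners (by omega), Nat.cast_sum, sum_congr rfl hsum, ← mul_sum,
      sum_corners_weight, hn, Nat.factorial_succ]
    push_cast
    ring

/-! ### Reflecting boxes to above the diagonal -/

namespace YoungDiagram

/-- The diagram obtained from `μ` by reflecting across the diagonal every box below it whose
mirror image is missing from `μ`. It is a Young diagram for every `μ`. -/
def reflectUp (μ : YoungDiagram) : YoungDiagram where
  cells := (μ ⊔ μ.transpose).cells.filter (fun c => c.1 ≤ c.2) ∪ (μ ⊓ μ.transpose).cells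
  isLowerSet := by
    rintro ⟨i, j⟩ ⟨k, l⟩ hle h
    have hki : k ≤ i := hle.1
    have hlj : l ≤ j := hle.2
    simp only [cells_sup, cells_inf, mem_coe, mem_union, mem_filter, mem_inter, mem_cells,
      mem_transpose, Prod.swap_prod_mk] at h ⊢
    rcases h with ⟨h, hij⟩ | ⟨h1, h2⟩
    · rcases le_or_gt k l with hkl | hkl
      · exact Or.inl ⟨h.imp (μ.up_left_mem hki hlj) (μ.up_left_mem hlj hki), hkl⟩
      -- Here `l < k ≤ i ≤ j`, so both `(k, l)` and `(l, k)` lie above-left of `(i, j)` and of `(j, i)`.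
      · rcases h with h | h
        · exact Or.inr ⟨μ.up_left_mem hki hlj h, μ.up_left_mem (by omega) (by omega) h⟩
        · exact Or.inr ⟨μ.up_left_mem (by omega) (by omega) h, μ.up_left_mem hlj hki h⟩
    · exact Or.inr ⟨μ.up_left_mem hki hlj h1, μ.up_left_mem hlj hki h2⟩

lemma mem_reflectUp {μ : YoungDiagram} {i j : ℕ} : (i, j) ∈ μ.reflectUp ↔
    (i ≤ j ∧ ((i, j) ∈ μ ∨ (j, i) ∈ μ)) ∨ ((i, j) ∈ μ ∧ (j, i) ∈ μ) := by
  rw [← mem_cells]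
  simp only [reflectUp, cells_sup, cells_inf, mem_union, mem_filter, mem_inter, mem_cells,
    mem_transpose, Prod.swap_prod_mk]
  tauto

lemma durfee_reflectUp (μ : YoungDiagram) : μ.reflectUp.durfee = μ.durfee :=
  durfee_eq_of (fun i => by rw [mem_reflectUp, lt_durfee]; simp)

end YoungDiagram

/-- Move the larger of two Frobenius coordinates to the first place. -/
def sortPair (p : ℕ × ℕ) : ℕ × ℕ := (max p.1 p.2, min p.1 p.2)

lemma sortPair_eq (p : ℕ × ℕ) :
    (p.2 ≤ p.1 ∧ sortPair p = p) ∨ (p.1 < p.2 ∧ sortPair p = p.swap) := by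
  rcases le_or_gt p.2 p.1 with h | h
  · exact Or.inl ⟨h, by simp [sortPair, h]⟩
  · refine Or.inr ⟨h, ?_⟩
    rw [sortPair, max_eq_right h.le, min_eq_left h.le]
    rfl

lemma frobG_sortPair (p : ℕ × ℕ) : frobG (sortPair p) = frobG p := by
  rcases sortPair_eq p with ⟨-, h⟩ | ⟨-, h⟩ <;> rw [h]
  exact frobG_swap p

namespace YoungDiagram

lemma frob_reflectUp {μ : YoungDiagram} {i : ℕ} (hi : i < μ.durfee) :
    μ.reflectUp.frob i = sortPair (μ.frob i) := by
  have h := lt_durfee.1 hi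
  have h1 := mem_iff_lt_rowLen.1 h
  have h2 := mem_iff_lt_colLen.1 h
  have hr : μ.reflectUp.rowLen i = max (μ.rowLen i) (μ.colLen i) := rowLen_eq_of (fun j => by
    rw [mem_reflectUp, mem_iff_lt_rowLen, mem_iff_lt_colLen]
    omega)
  have hl : μ.reflectUp.colLen i = min (μ.rowLen i) (μ.colLen i) := colLen_eq_of (fun j => by
    rw [mem_reflectUp, mem_iff_lt_colLen, mem_iff_lt_rowLen]
    omega)
  rw [frob, hr, hl, sortPair, frob]
  ext <;> simp only <;> omega

lemma card_reflectUp (μ : YoungDiagram) : μ.reflectUp.card = μ.card := by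
  rw [card_eq_sum_frob, card_eq_sum_frob, durfee_reflectUp]
  refine sum_congr rfl (fun i hi => ?_)
  rw [frob_reflectUp (mem_range.1 hi), sortPair, max_add_min]

end YoungDiagram

/-- With `δ = m - n` and `s = m + n + 2`, this is `(δ² - 1) / (s² - 1) < δ² / s²`, which holds
because `δ² < s²`. -/
lemma frobK_opposite_lt (m n : ℕ) : frobK (m + 1, m) (n, n + 1) < frobK (m + 1, m) (n + 1, n) := by
  unfold frobK
  push_cast
  have hm : (0 : ℚ) ≤ m := Nat.cast_nonneg m
  have hn : (0 : ℚ) ≤ n := Nat.cast_nonneg n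
  rw [div_lt_div_iff₀ (by positivity) (by positivity)]
  have : (0 : ℚ) < ((m + n + 2) - (m - n)) * ((m + n + 2) + (m - n)) := by
    apply mul_pos <;> linarith
  nlinarith [this]

lemma frobK_lt_sortPair {p q : ℕ × ℕ} (hp : p.1 ≤ p.2 + 1 ∧ p.2 ≤ p.1 + 1)
    (hq : q.1 ≤ q.2 + 1 ∧ q.2 ≤ q.1 + 1)
    (h : (p.2 < p.1 ∧ q.1 < q.2) ∨ (p.1 < p.2 ∧ q.2 < q.1)) :
    frobK p q < frobK (sortPair p) (sortPair q) := by
  obtain ⟨a, b⟩ := p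
  obtain ⟨c, d⟩ := q
  simp only at hp hq h
  rcases h with ⟨h1, h2⟩ | ⟨h1, h2⟩
  · obtain rfl : a = b + 1 := by omega
    obtain rfl : d = c + 1 := by omega
    simpa [sortPair] using frobK_opposite_lt b c
  · obtain rfl : b = a + 1 := by omega
    obtain rfl : c = d + 1 := by omega
    rw [← frobK_swap]
    simpa [sortPair] using frobK_opposite_lt a d

lemma frobK_le_sortPair {p q : ℕ × ℕ} (hp : p.1 ≤ p.2 + 1 ∧ p.2 ≤ p.1 + 1)
    (hq : q.1 ≤ q.2 + 1 ∧ q.2 ≤ q.1 + 1) :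
    frobK p q ≤ frobK (sortPair p) (sortPair q) := by
  by_cases h : (p.2 < p.1 ∧ q.1 < q.2) ∨ (p.1 < p.2 ∧ q.2 < q.1)
  · exact (frobK_lt_sortPair hp hq h).le
  · -- A pair with equal coordinates is fixed by the swap, so `p` and `q` can be swapped together.
    have fix : ∀ r : ℕ × ℕ, r.1 = r.2 → r.swap = r := fun r hr => Prod.ext hr.symm hr
    rcases sortPair_eq p with ⟨h1, e1⟩ | ⟨h1, e1⟩ <;>
      rcases sortPair_eq q with ⟨h2, e2⟩ | ⟨h2, e2⟩ <;> rw [e1, e2]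
    · rw [← frobK_swap p q, fix p (by omega)]
    · rw [← frobK_swap p q, fix q (by omega)]
    · exact (frobK_swap p q).ge

namespace YoungDiagram

/-- If arm and leg of every diagonal box differ by at most one, and there are diagonal boxes of both
orientations, reflecting increases the weight: no interaction factor decreases, and the one between
two oppositely oriented boxes strictly increases. -/
lemma weight_lt_reflectUp {μ : YoungDiagram}
    (hclose : ∀ i < μ.durfee,
      (μ.frob i).1 ≤ (μ.frob i).2 + 1 ∧ (μ.frob i).2 ≤ (μ.frob i).1 + 1)
    {k l : ℕ} (hk : k < μ.durfee) (hl : l < μ.durfee) (hku : (μ.frob k).2 < (μ.frob k).1)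
    (hld : (μ.frob l).1 < (μ.frob l).2) : μ.weight < μ.reflectUp.weight := by
  have hpos : ∀ i < μ.durfee, ∀ j ∈ range i, 0 < frobK (μ.frob j) (μ.frob i) := by
    intro i hi j hj
    have := frob_strictAnti (mem_range.1 hj) hi
    exact frobK_pos this.1 this.2
  have hle : ∀ i < μ.durfee, ∀ j ∈ range i, frobK (μ.frob j) (μ.frob i) ≤
      frobK (sortPair (μ.frob j)) (sortPair (μ.frob i)) := fun i hi j hj =>
    frobK_le_sortPair (hclose j ((mem_range.1 hj).trans hi)) (hclose i hi)
  have hW : μ.reflectUp.weight = ∏ i ∈ range μ.durfee, (frobG (μ.frob i) *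
      ∏ j ∈ range i, frobK (sortPair (μ.frob j)) (sortPair (μ.frob i))) := by
    rw [weight, durfee_reflectUp, frobW_congr (fun i hi => frob_reflectUp hi), frobW]
    exact prod_congr rfl (fun i _ => by rw [frobG_sortPair])
  rw [hW]
  have hlt : ∃ i < μ.durfee, ∃ j ∈ range i, frobK (μ.frob j) (μ.frob i) <
      frobK (sortPair (μ.frob j)) (sortPair (μ.frob i)) := by
    rcases lt_trichotomy k l with h | rfl | h
    · exact ⟨l, hl, k, mem_range.2 h,
        frobK_lt_sortPair (hclose k hk) (hclose l hl) (Or.inl ⟨hku, hld⟩)⟩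
    · omega
    · exact ⟨k, hk, l, mem_range.2 h,
        frobK_lt_sortPair (hclose l hl) (hclose k hk) (Or.inr ⟨hld, hku⟩)⟩
  obtain ⟨i, hi, j, hj, hij⟩ := hlt
  refine prod_lt_prod (fun i hi => mul_pos (frobG_pos _) (prod_pos (hpos i (mem_range.1 hi))))
    (fun i hi => mul_le_mul_of_nonneg_left (prod_le_prod
      (fun j hj => (hpos i (mem_range.1 hi) j hj).le) (hle i (mem_range.1 hi))) (frobG_pos _).le)
    ⟨i, mem_range.2 hi, mul_lt_mul_of_pos_left
      (prod_lt_prod (hpos i hi) (hle i hi) ⟨j, hj, hij⟩) (frobG_pos _)⟩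

end YoungDiagram

/-- If every row and column of `λ` contains at most one box outside its base
subdiagram, and both `A_u` and `A_d` are nonempty, then reflecting the below-diagonal boxes
yields a Young diagram of the same size and strictly larger dimension. -/
theorem stmt0 (lam : YoungDiagram)
    (A : Finset (ℕ × ℕ)) (hA : A = lam.cells \ baseCells lam)
    (hrow : ∀ c ∈ A, ∀ c' ∈ A, c.1 = c'.1 → c = c')
    (hcol : ∀ c ∈ A, ∀ c' ∈ A, c.2 = c'.2 → c = c')
    (Au Ad : Finset (ℕ × ℕ))
    (hAu : Au = A.filter (fun c => c.1 < c.2))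
    (hAd : Ad = A.filter (fun c => c.2 < c.1))
    (hAuNe : Au.Nonempty) (hAdNe : Ad.Nonempty) :
    ∃ lam' : YoungDiagram,
      lam'.cells = baseCells lam ∪ Au ∪ Ad.image (fun c => (c.2, c.1)) ∧
      lam'.card = lam.card ∧
      dimYD lam < dimYD lam' := by
  have hmemA : ∀ i j, (i, j) ∈ A ↔ (i, j) ∈ lam ∧ (j, i) ∉ lam := by
    intro i j
    rw [hA]
    simp only [baseCells, mem_sdiff, mem_filter, mem_cells]
    tauto
  have hclose : ∀ i < lam.durfee,
      (lam.frob i).1 ≤ (lam.frob i).2 + 1 ∧ (lam.frob i).2 ≤ (lam.frob i).1 + 1 := by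
    intro i hi
    have hr := rowLen_eq_frob hi
    have hl := colLen_eq_frob hi
    -- If arm and leg differ by two, the longer of the two contains two boxes of `A`.
    constructor
    · by_contra h
      have mem : ∀ j, lam.colLen i ≤ j → j < lam.rowLen i → (i, j) ∈ A := fun j h1 h2 =>
        (hmemA i j).2 ⟨mem_iff_lt_rowLen.2 h2, fun h => by
          have := mem_iff_lt_colLen.1 h
          omega⟩
      have := hrow _ (mem (lam.colLen i) le_rfl (by omega)) _
        (mem (lam.colLen i + 1) (by omega) (by omega)) rfl
      simp at this
    · by_contra h
      have mem : ∀ j, lam.rowLen i ≤ j → j < lam.colLen i → (j, i) ∈ A := fun j h1 h2 =>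
        (hmemA j i).2 ⟨mem_iff_lt_colLen.2 h2, fun h => by
          have := mem_iff_lt_rowLen.1 h
          omega⟩
      have := hcol _ (mem (lam.rowLen i) le_rfl (by omega)) _
        (mem (lam.rowLen i + 1) (by omega) (by omega)) rfl
      simp at this
  refine ⟨lam.reflectUp, ?_, card_reflectUp lam, ?_⟩
  · ext ⟨i, j⟩
    have himg : (i, j) ∈ Ad.image (fun c => (c.2, c.1)) ↔ ((j, i) ∈ A ∧ i < j) := by
      rw [hAd]
      simp only [mem_image, mem_filter, Prod.exists, Prod.mk.injEq]
      constructor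
      · rintro ⟨a, b, h, rfl, rfl⟩
        exact h
      · intro h
        exact ⟨j, i, h, rfl, rfl⟩
    rw [mem_cells, mem_reflectUp, mem_union, mem_union, himg, hAu]
    simp only [baseCells, mem_filter, hmemA, mem_cells]
    rcases lt_trichotomy i j with h | rfl | h
    · simp only [h, h.le, true_and, and_true]
      tauto
    · simp
    · simp only [h.not_ge, h.not_gt, false_and, and_false, false_or, or_false]
  · obtain ⟨⟨i, j⟩, hu⟩ := hAuNe
    obtain ⟨⟨k, l⟩, hd⟩ := hAdNe
    rw [hAu, mem_filter, hmemA] at hu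
    rw [hAd, mem_filter, hmemA] at hd
    obtain ⟨⟨hu1, hu2⟩, hij⟩ := hu
    obtain ⟨⟨hd1, hd2⟩, hlk⟩ := hd
    simp only at hij hlk
    have hi : i < lam.durfee := lt_durfee.2 (lam.up_left_mem le_rfl hij.le hu1)
    have hl : l < lam.durfee := lt_durfee.2 (lam.up_left_mem hlk.le le_rfl hd1)
    have e1 := rowLen_eq_frob hi
    have e2 := colLen_eq_frob hi
    have e3 := rowLen_eq_frob hl
    have e4 := colLen_eq_frob hl
    rw [mem_iff_lt_rowLen] at hu1 hd2
    rw [mem_iff_lt_colLen] at hu2 hd1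
    have hw := weight_lt_reflectUp hclose hi hl (by omega) (by omega)
    have : (dimYD lam : ℚ) < dimYD lam.reflectUp := by
      rw [dimYD_eq_weight, dimYD_eq_weight, card_reflectUp]
      exact mul_lt_mul_of_pos_left hw (by exact_mod_cast Nat.factorial_pos _)
    exact_mod_cast this
end

section
/- Let λ_sym be a symmetric Young diagram and let (k,l) with k < l and (t,s) with t > s be two boxes not in λ_sym such that λ = λ_sym ∪ {(k,l)} ∪ {(t,s)} is a Young diagram in which each row and each column contains at most one of the two added boxes (equivalently, s ≠ k and l ≠ t). Then λ' = λ_sym ∪ {(k,l)} ∪ {(s,t)} is a Young diagram of the same size and dim(λ') > dim(λ). -/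
/-!
The inequality is proved bijectively, without the hook length formula.

Fold a tableau `T` along the diagonal: an off-diagonal pair `{c, c.swap}` carries an unordered pair
of entries (the entry `0` standing for an absent box) together with a sign telling which box
carries which entry. Let `x`, `y` be neighbouring boxes strictly above the diagonal. For given
unordered entries, either both relative signs of `x` and `y` respect the order conditions, or only
equal signs do; in the second case `x` and `y` are *linked* (`Linked`). A diagonal box constrains
a neighbour and its mirror image in the same way, so it imposes no condition on signs.
Hence the tableaux with given folded data are exactly the sign patterns constant on the
connected components of the link graph, and this graph depends on the folded data only (`linked_flip`).

In a tableau of shape `lam`, the boxes `(k, l)` and `(t, s)` lie on opposite sides of the diagonal,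
so `(k, l)` and `(s, t)` have opposite signs and lie in different components. Reflecting the
component of `(s, t)` gives a tableau of shape `lam'`, and the map is injective because the link
graph, hence the component, can be read off from the result. Its image misses every tableau of shape
`lam'` in which `(k, l)` and `(s, t)` are connected; the row-by-row filling is one (`eqvGen_hook`),
so the inequality is strict.
-/

open Finset

/-- `y` is the right or lower neighbour of `x`. -/
def Adj (x y : ℕ × ℕ) : Prop := y = (x.1, x.2 + 1) ∨ y = (x.1 + 1, x.2)

/-- The condition on the entries `u`, `v` of a box and its right or lower neighbour, where the
entry `0` marks an absent box. -/
def Ok (u v : ℕ) : Prop := v ≠ 0 → 0 < u ∧ u < v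

/-- The support of `T` is a lower set, and `T` is increasing on it along rows and columns. -/
def Good (T : ℕ × ℕ → ℕ) : Prop := ∀ x y, Adj x y → Ok (T x) (T y)

/-- `x` and its neighbour `y` are linked if reflecting exactly one of the pairs `{x, x.swap}`,
`{y, y.swap}` across the diagonal would violate the order conditions. -/
def Linked (T : ℕ × ℕ → ℕ) (x y : ℕ × ℕ) : Prop :=
  Adj x y ∧ ¬ (Ok (T x.swap) (T y) ∧ Ok (T x) (T y.swap))

/-- The connected component of `b` in the link graph of `T`, together with its mirror image. -/
def comp (T : ℕ × ℕ → ℕ) (b : ℕ × ℕ) : Set (ℕ × ℕ) :=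
  {c | Relation.EqvGen (Linked T) c b ∨ Relation.EqvGen (Linked T) c.swap b}

open Classical in
/-- The reflection across the diagonal restricted to `C`. -/
noncomputable def reflect (C : Set (ℕ × ℕ)) (c : ℕ × ℕ) : ℕ × ℕ := if c ∈ C then c.swap else c

/-- The sign of a box: its entry precedes that of its mirror image, an absent box counting as
carrying the entry infinity. -/
def First (T : ℕ × ℕ → ℕ) (x : ℕ × ℕ) : Prop := T x ≠ 0 ∧ (T x.swap = 0 ∨ T x < T x.swap)

lemma Adj.swap {x y : ℕ × ℕ} (h : Adj x y) : Adj x.swap y.swap := by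
  rcases h with rfl | rfl
  · exact Or.inr rfl
  · exact Or.inl rfl

lemma Linked.swap {T : ℕ × ℕ → ℕ} {x y : ℕ × ℕ} (h : Linked T x y) :
    Linked T x.swap y.swap := by
  refine ⟨h.1.swap, fun h' => h.2 ?_⟩
  simp only [Prod.swap_swap] at h'
  exact ⟨h'.2, h'.1⟩

/-! ### The link graph -/

lemma swap_mem_comp {T : ℕ × ℕ → ℕ} {b c : ℕ × ℕ} : c.swap ∈ comp T b ↔ c ∈ comp T b := by
  simp only [comp, Set.mem_ofPred_eq, Prod.swap_swap]
  exact or_comm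

lemma mem_comp_iff_of_linked {T : ℕ × ℕ → ℕ} {b x y : ℕ × ℕ} (h : Linked T x y) :
    x ∈ comp T b ↔ y ∈ comp T b := by
  have e1 := Relation.EqvGen.rel _ _ h
  have e2 := Relation.EqvGen.rel _ _ h.swap
  constructor
  · rintro (h' | h')
    · exact Or.inl ((e1.symm).trans _ _ _ h')
    · exact Or.inr ((e2.symm).trans _ _ _ h')
  · rintro (h' | h')
    · exact Or.inl (e1.trans _ _ _ h')
    · exact Or.inr (e2.trans _ _ _ h')

lemma Linked.first_iff {T : ℕ × ℕ → ℕ} (hT : Good T) {x y : ℕ × ℕ} (h : Linked T x y) :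
    First T x ↔ First T y := by
  have h1 := hT _ _ h.1
  have h2 := hT _ _ h.1.swap
  have h3 := h.2
  unfold Ok at h1 h2 h3
  unfold First
  generalize T x = u at *
  generalize T y = v at *
  generalize T x.swap = u' at *
  generalize T y.swap = v' at *
  grind

/-- Diagonal boxes are never linked, so links do not cross the diagonal. -/
lemma Linked.upper_iff {T : ℕ × ℕ → ℕ} (hT : Good T) {x y : ℕ × ℕ} (h : Linked T x y) :
    x.1 < x.2 ↔ y.1 < y.2 := by
  have hx : x.1 ≠ x.2 := by
    intro e
    have e' : x.swap = x := Prod.ext e.symm e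
    have h2 := hT _ _ h.1.swap
    have h3 := h.2
    rw [e'] at h2 h3
    exact h3 ⟨hT _ _ h.1, h2⟩
  have hy : y.1 ≠ y.2 := by
    intro e
    have e' : y.swap = y := Prod.ext e.symm e
    have h2 := hT _ _ h.1.swap
    have h3 := h.2
    rw [e'] at h2 h3
    exact h3 ⟨h2, hT _ _ h.1⟩
  rcases h.1 with rfl | rfl <;> simp only at hy ⊢ <;> omega

lemma eqvGen_invariant {T : ℕ × ℕ → ℕ} (hT : Good T) {x y : ℕ × ℕ}
    (h : Relation.EqvGen (Linked T) x y) :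
    (First T x ↔ First T y) ∧ (x.1 < x.2 ↔ y.1 < y.2) := by
  induction h with
  | rel x y h => exact ⟨h.first_iff hT, h.upper_iff hT⟩
  | refl x => exact ⟨Iff.rfl, Iff.rfl⟩
  | symm x y _ ih => exact ⟨ih.1.symm, ih.2.symm⟩
  | trans x y z _ _ ih1 ih2 => exact ⟨ih1.1.trans ih2.1, ih1.2.trans ih2.2⟩

/-! ### Reflecting a component -/

lemma reflect_of_mem {C : Set (ℕ × ℕ)} {c : ℕ × ℕ} (h : c ∈ C) : reflect C c = c.swap := by
  simp [reflect, h]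

lemma reflect_of_notMem {C : Set (ℕ × ℕ)} {c : ℕ × ℕ} (h : c ∉ C) : reflect C c = c := by
  simp [reflect, h]

lemma reflect_reflect {C : Set (ℕ × ℕ)} (hC : ∀ c, c.swap ∈ C ↔ c ∈ C) (c : ℕ × ℕ) :
    reflect C (reflect C c) = c := by
  by_cases h : c ∈ C
  · rw [reflect_of_mem h, reflect_of_mem ((hC c).2 h), Prod.swap_swap]
  · rw [reflect_of_notMem h, reflect_of_notMem h]

lemma reflect_swap {C : Set (ℕ × ℕ)} (hC : ∀ c, c.swap ∈ C ↔ c ∈ C) (c : ℕ × ℕ) :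
    reflect C c.swap = (reflect C c).swap := by
  by_cases h : c ∈ C
  · rw [reflect_of_mem h, reflect_of_mem ((hC c).2 h)]
  · rw [reflect_of_notMem h, reflect_of_notMem (fun h' => h ((hC c).1 h'))]

lemma good_flip {T : ℕ × ℕ → ℕ} (hT : Good T) (b : ℕ × ℕ) :
    Good (T ∘ reflect (comp T b)) := by
  intro x y hxy
  have hcross : ¬ (x ∈ comp T b ↔ y ∈ comp T b) →
      Ok (T x.swap) (T y) ∧ Ok (T x) (T y.swap) := by
    intro hne
    by_contra hno
    exact hne (mem_comp_iff_of_linked ⟨hxy, hno⟩)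
  have h1 := hT _ _ hxy
  have h2 := hT _ _ hxy.swap
  by_cases hx : x ∈ comp T b <;> by_cases hy : y ∈ comp T b <;>
    simp only [Function.comp, reflect, hx, hy, if_true, if_false] at hcross ⊢
  · exact h2
  · exact (hcross (by simp)).1
  · exact (hcross (by simp)).2
  · exact h1

/-- The link graph is unchanged by the reflection of a component. -/
lemma linked_flip {T : ℕ × ℕ → ℕ} (hT : Good T) (b : ℕ × ℕ) :
    Linked (T ∘ reflect (comp T b)) = Linked T := by
  funext x y
  refine propext (and_congr_right fun hxy => not_congr ?_)
  have hcross : ¬ (x ∈ comp T b ↔ y ∈ comp T b) →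
      Ok (T x.swap) (T y) ∧ Ok (T x) (T y.swap) := by
    intro hne
    by_contra hno
    exact hne (mem_comp_iff_of_linked ⟨hxy, hno⟩)
  have h1 := hT _ _ hxy
  have h2 := hT _ _ hxy.swap
  by_cases hx : x ∈ comp T b <;> by_cases hy : y ∈ comp T b <;>
    simp only [Function.comp, reflect, swap_mem_comp, hx, hy, if_true, if_false,
      Prod.swap_swap] at hcross ⊢
  · exact and_comm
  · exact iff_of_true ⟨h1, h2⟩ (hcross (by simp))
  · exact iff_of_true ⟨h2, h1⟩ (hcross (by simp))

lemma comp_congr {T T' : ℕ × ℕ → ℕ} (h : Linked T = Linked T') (b : ℕ × ℕ) :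
    comp T b = comp T' b := by
  unfold comp; rw [h]

/-! ### Standard Young tableaux -/

lemma IsSYT.ne_zero_iff {μ : YoungDiagram} {T : ℕ × ℕ → ℕ} (h : IsSYT μ T) (c : ℕ × ℕ) :
    T c ≠ 0 ↔ c ∈ μ := by
  constructor
  · intro hc
    by_contra hn
    exact hc (h.1 c hn)
  · intro hc
    have := (h.2.1 c hc).1
    omega

lemma IsSYT.good {μ : YoungDiagram} {T : ℕ × ℕ → ℕ} (h : IsSYT μ T) : Good T := by
  rintro ⟨i, j⟩ y hxy hy
  have hmem := (h.ne_zero_iff y).1 hy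
  rcases hxy with rfl | rfl
  · exact ⟨(h.2.1 _ (μ.up_left_mem le_rfl (Nat.le_succ _) hmem)).1,
      h.2.2.2.1 _ _ _ (Nat.lt_succ_self _) hmem⟩
  · exact ⟨(h.2.1 _ (μ.up_left_mem (Nat.le_succ _) le_rfl hmem)).1,
      h.2.2.2.2 _ _ _ (Nat.lt_succ_self _) hmem⟩

lemma isSYT_of_good {μ : YoungDiagram} {T : ℕ × ℕ → ℕ} (hs : ∀ c, T c ≠ 0 ↔ c ∈ μ)
    (hle : ∀ c, T c ≤ μ.card) (hinj : Set.InjOn T ↑μ.cells) (hT : Good T) : IsSYT μ T := by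
  refine ⟨fun c hc => ?_, fun c hc => ⟨?_, hle c⟩, hinj, ?_, ?_⟩
  · by_contra h0
    exact hc ((hs c).1 h0)
  · exact Nat.pos_of_ne_zero ((hs c).2 hc)
  · intro i j₁ j₂ hj
    induction j₂, hj using Nat.le_induction with
    | base => exact fun hm => (hT (i, j₁) _ (Or.inl rfl) ((hs _).2 hm)).2
    | succ n hn ih =>
      exact fun hm => (ih (μ.up_left_mem le_rfl (Nat.le_succ _) hm)).trans
        (hT (i, n) _ (Or.inl rfl) ((hs _).2 hm)).2
  · intro i₁ i₂ j hi
    induction i₂, hi using Nat.le_induction with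
    | base => exact fun hm => (hT (i₁, j) _ (Or.inr rfl) ((hs _).2 hm)).2
    | succ n hn ih =>
      exact fun hm => (ih (μ.up_left_mem (Nat.le_succ _) le_rfl hm)).trans
        (hT (n, j) _ (Or.inr rfl) ((hs _).2 hm)).2

lemma finite_SYT_s1 (μ : YoungDiagram) : Finite {T : ℕ × ℕ → ℕ // IsSYT μ T} := by
  let F : {T : ℕ × ℕ → ℕ // IsSYT μ T} → (μ.cells → Fin (μ.card + 1)) :=
    fun T c => ⟨T.1 c.1, Nat.lt_succ_of_le (T.2.2.1 c.1 ((μ.mem_cells _).1 c.2)).2⟩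
  refine Finite.of_injective F ?_
  intro T T' h
  apply Subtype.ext
  funext c
  by_cases hc : c ∈ μ
  · exact congrArg Fin.val (congrFun h ⟨c, (μ.mem_cells _).2 hc⟩)
  · rw [T.2.1 c hc, T'.2.1 c hc]

/-! ### The row-by-row filling -/

/-- The tableau filling `μ` row by row: the entry of a box is the number of boxes weakly preceding
it in the lexicographic order, and `0` off `μ`. -/
def rowFill (μ : YoungDiagram) (c : ℕ × ℕ) : ℕ :=
  if c ∈ μ.cells then
    (μ.cells.filter (fun d => d.1 < c.1 ∨ (d.1 = c.1 ∧ d.2 ≤ c.2))).card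
  else 0

lemma rowFill_ne_zero_iff (μ : YoungDiagram) (c : ℕ × ℕ) : rowFill μ c ≠ 0 ↔ c ∈ μ := by
  unfold rowFill
  rw [← μ.mem_cells]
  split_ifs with h
  · simp only [h, iff_true]
    exact Finset.card_ne_zero_of_mem (a := c) (Finset.mem_filter.2 ⟨h, Or.inr ⟨rfl, le_rfl⟩⟩)
  · simp [h]

lemma rowFill_lt {μ : YoungDiagram} {c d : ℕ × ℕ} (hc : c ∈ μ) (hd : d ∈ μ)
    (h : c.1 < d.1 ∨ (c.1 = d.1 ∧ c.2 < d.2)) : rowFill μ c < rowFill μ d := by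
  rw [← μ.mem_cells] at hc hd
  unfold rowFill
  rw [if_pos hc, if_pos hd]
  apply Finset.card_lt_card
  rw [Finset.ssubset_iff_of_subset]
  · refine ⟨d, ?_, ?_⟩
    · rw [Finset.mem_filter]
      exact ⟨hd, Or.inr ⟨rfl, le_rfl⟩⟩
    · rw [Finset.mem_filter]
      omega
  · intro e he
    rw [Finset.mem_filter] at he ⊢
    exact ⟨he.1, by omega⟩

lemma isSYT_rowFill (μ : YoungDiagram) : IsSYT μ (rowFill μ) := by
  refine isSYT_of_good (rowFill_ne_zero_iff μ) ?_ ?_ ?_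
  · intro c
    unfold rowFill
    split_ifs
    · exact Finset.card_filter_le _ _
    · exact Nat.zero_le _
  · intro c hc d hd h
    have hc' : c ∈ μ := (μ.mem_cells _).1 hc
    have hd' : d ∈ μ := (μ.mem_cells _).1 hd
    by_contra hne
    have hne' : ¬ (c.1 = d.1 ∧ c.2 = d.2) := fun h => hne (Prod.ext h.1 h.2)
    rcases (by omega : (c.1 < d.1 ∨ (c.1 = d.1 ∧ c.2 < d.2)) ∨
      (d.1 < c.1 ∨ (d.1 = c.1 ∧ d.2 < c.2))) with h1 | h1
    · exact (rowFill_lt hc' hd' h1).ne h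
    · exact (rowFill_lt hd' hc' h1).ne' h
  · rintro ⟨i, j⟩ y hxy hy
    have hmem := (rowFill_ne_zero_iff μ y).1 hy
    rcases hxy with rfl | rfl
    · have hx : (i, j) ∈ μ := μ.up_left_mem le_rfl (Nat.le_succ _) hmem
      exact ⟨Nat.pos_of_ne_zero ((rowFill_ne_zero_iff μ _).2 hx),
        rowFill_lt hx hmem (Or.inr ⟨rfl, Nat.lt_succ_self _⟩)⟩
    · have hx : (i, j) ∈ μ := μ.up_left_mem (Nat.le_succ _) le_rfl hmem
      exact ⟨Nat.pos_of_ne_zero ((rowFill_ne_zero_iff μ _).2 hx),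
        rowFill_lt hx hmem (Or.inl (Nat.lt_succ_self _))⟩

/-- In the row-by-row filling, all neighbouring boxes strictly above the diagonal are linked:
the mirror image of the first lies in a row below the second. -/
lemma linked_rowFill {μ : YoungDiagram} {x y : ℕ × ℕ} (hxy : Adj x y) (hy : y ∈ μ)
    (hlt : y.1 < x.2) : Linked (rowFill μ) x y := by
  refine ⟨hxy, fun h => ?_⟩
  obtain ⟨h0, h1⟩ := h.1 ((rowFill_ne_zero_iff μ y).2 hy)
  have hx : x.swap ∈ μ := (rowFill_ne_zero_iff μ _).1 h0.ne'
  exact absurd (rowFill_lt hy hx (Or.inl hlt)) h1.not_gt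

/-- Two boxes strictly above the diagonal, one weakly to the north-east of the other, are connected
in the link graph of the row-by-row filling by the hook through `(k, t)`. -/
lemma eqvGen_hook {μ : YoungDiagram} {k l s t : ℕ} (hks : k ≤ s) (hst : s < t) (htl : t ≤ l)
    (ha : (k, l) ∈ μ) (hb : (s, t) ∈ μ) :
    Relation.EqvGen (Linked (rowFill μ)) (k, l) (s, t) := by
  have row : ∀ n, t ≤ n → (k, n) ∈ μ →
      Relation.EqvGen (Linked (rowFill μ)) (k, t) (k, n) := by
    intro n hn
    induction n, hn using Nat.le_induction with
    | base => exact fun _ => .refl _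
    | succ n hn ih =>
      intro hm
      exact (ih (μ.up_left_mem le_rfl (Nat.le_succ _) hm)).trans _ _ _
        (.rel _ _ (linked_rowFill (Or.inl rfl) hm (by simp only; omega)))
  have col : ∀ n, k ≤ n → n < t → (n, t) ∈ μ →
      Relation.EqvGen (Linked (rowFill μ)) (k, t) (n, t) := by
    intro n hn
    induction n, hn using Nat.le_induction with
    | base => exact fun _ _ => .refl _
    | succ n hn ih =>
      intro hlt hm
      exact (ih (by omega) (μ.up_left_mem (Nat.le_succ _) le_rfl hm)).trans _ _ _
        (.rel _ _ (linked_rowFill (Or.inr rfl) hm hlt))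
  exact ((row l htl ha).symm).trans _ _ _ (col s hks hst hb)

/-! ### The comparison of dimensions -/

theorem stmt1 (musym : YoungDiagram) (hsym : musym.IsSymm)
    (k l t s : ℕ) (hkl : k < l) (hts : s < t)
    (hklmem : (k, l) ∉ musym) (htsmem : (t, s) ∉ musym)
    (hsk : s ≠ k) (hlt : l ≠ t)
    (lam : YoungDiagram)
    (hlam : lam.cells = insert (k, l) (insert (t, s) musym.cells)) :
    ∃ lam' : YoungDiagram,
      lam'.cells = insert (k, l) (insert (s, t) musym.cells) ∧
      lam'.card = lam.card ∧
      dimYD lam < dimYD lam' := by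
  have mem_lam : ∀ i j, (i, j) ∈ lam ↔
      (i = k ∧ j = l) ∨ (i = t ∧ j = s) ∨ (i, j) ∈ musym := by
    intro i j
    rw [← lam.mem_cells, hlam]
    simp
  have hstmem : (s, t) ∉ musym := fun h => htsmem ((hsym _ _).1 h)
  have hlkmem : (l, k) ∉ musym := fun h => hklmem ((hsym _ _).1 h)
  have ha : (k, l) ∈ lam := (mem_lam _ _).2 (Or.inl ⟨rfl, rfl⟩)
  have hb : (t, s) ∈ lam := (mem_lam _ _).2 (Or.inr (Or.inl ⟨rfl, rfl⟩))
  have hst_lam : (s, t) ∉ lam := by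
    rw [mem_lam]
    rintro (h | h | h)
    · omega
    · omega
    · exact hstmem h
  have hlk_lam : (l, k) ∉ lam := by
    rw [mem_lam]
    rintro (h | h | h)
    · omega
    · omega
    · exact hlkmem h
  -- The two outer corners above the diagonal are incomparable.
  have hinc1 : ¬ (s ≤ k ∧ t ≤ l) := fun h => hst_lam (lam.up_left_mem h.1 h.2 ha)
  have hinc2 : ¬ (k ≤ s ∧ l ≤ t) := fun h => hlk_lam (lam.up_left_mem h.2 h.1 hb)
  let lam' : YoungDiagram :=
    { cells := insert (k, l) (insert (s, t) musym.cells)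
      isLowerSet := by
        rintro ⟨p, q⟩ ⟨i, j⟩ hle hp
        obtain ⟨hip, hjq⟩ : i ≤ p ∧ j ≤ q := hle
        simp only [coe_insert, Set.mem_insert_iff, Prod.mk.injEq, SetLike.mem_coe,
          YoungDiagram.mem_cells] at hp ⊢
        rcases hp with ⟨rfl, rfl⟩ | ⟨rfl, rfl⟩ | hp
        · rcases (mem_lam _ _).1 (lam.up_left_mem hip hjq ha) with h | h | h
          · exact Or.inl h
          · omega
          · exact Or.inr (Or.inr h)
        · rcases (mem_lam _ _).1 (lam.up_left_mem hjq hip hb) with h | h | h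
          · omega
          · exact Or.inr (Or.inl ⟨h.2, h.1⟩)
          · exact Or.inr (Or.inr ((hsym _ _).1 h))
        · exact Or.inr (Or.inr (musym.up_left_mem hip hjq hp)) }
  have mem_lam' : ∀ i j, (i, j) ∈ lam' ↔
      (i = k ∧ j = l) ∨ (i = s ∧ j = t) ∨ (i, j) ∈ musym := by
    intro i j
    rw [← lam'.mem_cells]
    simp [lam']
  have hcard : lam'.card = lam.card := by
    change (insert (k, l) (insert (s, t) musym.cells)).card = lam.cells.card
    rw [hlam]
    rw [card_insert_of_notMem, card_insert_of_notMem, card_insert_of_notMem,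
      card_insert_of_notMem]
    · simpa using htsmem
    · simp only [mem_insert, Prod.mk.injEq, YoungDiagram.mem_cells, not_or]
      exact ⟨by omega, hklmem⟩
    · simpa using hstmem
    · simp only [mem_insert, Prod.mk.injEq, YoungDiagram.mem_cells, not_or]
      exact ⟨by omega, hklmem⟩
  have hsep : ∀ T, IsSYT lam T → ¬ Relation.EqvGen (Linked T) (k, l) (s, t) := by
    intro T hT h
    have h1 := (eqvGen_invariant hT.good h).1.1
      ⟨(hT.ne_zero_iff _).2 ha, Or.inl (hT.1 _ hlk_lam)⟩
    exact hst_lam ((hT.ne_zero_iff _).1 h1.1)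
  have hbC : ∀ T, (s, t) ∈ comp T (s, t) := fun T => Or.inl (.refl _)
  have haC : ∀ T, IsSYT lam T → (k, l) ∉ comp T (s, t) := by
    rintro T hT (h | h)
    · exact hsep T hT h
    · have := (eqvGen_invariant hT.good h).2
      simp only [Prod.swap_prod_mk] at this
      omega
  have hmem : ∀ T, IsSYT lam T → ∀ c, reflect (comp T (s, t)) c ∈ lam ↔ c ∈ lam' := by
    rintro T hT ⟨i, j⟩
    by_cases hc : (i, j) ∈ comp T (s, t)
    · have hne : ¬ (i = k ∧ j = l) := by
        rintro ⟨rfl, rfl⟩; exact haC T hT hc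
      have hne' : ¬ (j = k ∧ i = l) := by
        rintro ⟨rfl, rfl⟩; exact haC T hT (swap_mem_comp.1 hc)
      rw [reflect_of_mem hc, Prod.swap_prod_mk, mem_lam, mem_lam', hsym j i,
        and_comm (a := j = t)]
      simp only [hne, hne', false_or]
    · have hne : ¬ (i = s ∧ j = t) := by
        rintro ⟨rfl, rfl⟩; exact hc (hbC T)
      have hne' : ¬ (i = t ∧ j = s) := by
        rintro ⟨rfl, rfl⟩; exact hc (swap_mem_comp.1 (hbC T))
      rw [reflect_of_notMem hc, mem_lam, mem_lam']
      simp only [hne, hne', false_or]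
  have hflip : ∀ T, IsSYT lam T → IsSYT lam' (T ∘ reflect (comp T (s, t))) := by
    intro T hT
    refine isSYT_of_good (fun c => ?_) (fun c => ?_) ?_ (good_flip hT.good _)
    · rw [Function.comp, hT.ne_zero_iff, hmem T hT]
    · rw [hcard, Function.comp]
      by_cases h : reflect (comp T (s, t)) c ∈ lam
      · exact (hT.2.1 _ h).2
      · rw [hT.1 _ h]; exact Nat.zero_le _
    · intro c hc d hd h
      have h' := hT.2.2.1 ((lam.mem_cells _).2 ((hmem T hT c).2 ((lam'.mem_cells _).1 hc)))
        ((lam.mem_cells _).2 ((hmem T hT d).2 ((lam'.mem_cells _).1 hd))) h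
      rw [← reflect_reflect (C := comp T (s, t)) (fun _ => swap_mem_comp) c, h',
        reflect_reflect (fun _ => swap_mem_comp)]
  refine ⟨lam', rfl, hcard, ?_⟩
  let Φ : {T : ℕ × ℕ → ℕ // IsSYT lam T} → {T : ℕ × ℕ → ℕ // IsSYT lam' T} :=
    fun T => ⟨T.1 ∘ reflect (comp T.1 (s, t)), hflip T.1 T.2⟩
  have hinj : Function.Injective Φ := by
    intro T T' h
    have h1 : T.1 ∘ reflect (comp T.1 (s, t)) = T'.1 ∘ reflect (comp T'.1 (s, t)) :=
      congrArg Subtype.val h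
    have hL : Linked T.1 = Linked T'.1 := by
      rw [← linked_flip T.2.good (s, t), h1, linked_flip T'.2.good]
    rw [comp_congr hL] at h1
    apply Subtype.ext
    funext c
    have h2 := congrFun h1 (reflect (comp T'.1 (s, t)) c)
    simpa only [Function.comp, reflect_reflect (C := comp T'.1 (s, t))
      (fun _ => swap_mem_comp)] using h2
  have hnot : (⟨rowFill lam', isSYT_rowFill lam'⟩ : {T : ℕ × ℕ → ℕ // IsSYT lam' T}) ∉
      Set.range Φ := by
    rintro ⟨T, hT⟩
    have h1 : T.1 ∘ reflect (comp T.1 (s, t)) = rowFill lam' := congrArg Subtype.val hT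
    have hL : Linked (rowFill lam') = Linked T.1 := by
      rw [← h1, linked_flip T.2.good]
    have ha' : (k, l) ∈ lam' := (mem_lam' _ _).2 (Or.inl ⟨rfl, rfl⟩)
    have hb' : (s, t) ∈ lam' := (mem_lam' _ _).2 (Or.inr (Or.inl ⟨rfl, rfl⟩))
    apply hsep T.1 T.2
    rw [← hL]
    rcases Nat.lt_or_gt_of_ne hsk with h | h
    · exact (eqvGen_hook h.le hkl (by omega) hb' ha').symm
    · exact eqvGen_hook h.le hts (by omega) ha' hb'
  have := finite_SYT_s1 lam
  have := finite_SYT_s1 lam'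
  have := Fintype.ofFinite {T : ℕ × ℕ → ℕ // IsSYT lam T}
  have := Fintype.ofFinite {T : ℕ × ℕ → ℕ // IsSYT lam' T}
  unfold dimYD
  rw [Nat.card_eq_fintype_card, Nat.card_eq_fintype_card]
  exact Fintype.card_lt_of_injective_of_notMem Φ hinj hnot
end

section
/- Let λ_sym be a symmetric Young diagram, let (k,l) with k < l and (t,s) with t > s, s ≠ k, t ≠ l be boxes such that λ = λ_sym ∪ {(k,l)} ∪ {(t,s)} and λ' = λ_sym ∪ {(k,l)} ∪ {(s,t)} are Young diagrams. Write h for hook lengths in λ and h' for hook lengths in λ'. Then for every box (i,j) of λ lying in the reverse hook of (t,s) or with (j,i) in the reverse hook of (s,t) in λ', such that i ∉ {k,l} and j ∉ {k,l}, one has h(i,j) = h'(j,i). -/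
/-!
The box `(k, l)` lies in neither hook, because `i` and `j` avoid `k` and `l`. The other boxes of
`lam` and `lam'` are exchanged by the reflection `(a, b) ↦ (b, a)`: it fixes `musym` and sends
`(t, s)` to `(s, t)`. It therefore maps the hook of `(i, j)` in `lam` bijectively onto the hook of
`(j, i)` in `lam'`.
-/

open Finset

/-- `(i,j)` lies in the reverse hook of the box `(a,b)`: it is `(a,b)` itself, a box below it in
column `b`, or a box to its left in row `a`. -/
def InRevHook (a b i j : ℕ) : Prop := (j = b ∧ i ≤ a) ∨ (i = a ∧ j ≤ b)

theorem stmt7 (musym : YoungDiagram) (hsym : musym.IsSymm)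
    (k l t s : ℕ) (hkl : k < l) (hts : s < t) (hsk : s ≠ k) (htl : t ≠ l)
    (hklmem : (k, l) ∉ musym) (htsmem : (t, s) ∉ musym)
    (lam lam' : YoungDiagram)
    (hlam : lam.cells = insert (k, l) (insert (t, s) musym.cells))
    (hlam' : lam'.cells = insert (k, l) (insert (s, t) musym.cells)) :
    ∀ i j : ℕ, (i, j) ∈ lam →
      (InRevHook t s i j ∨ InRevHook s t j i) →
      i ≠ k → i ≠ l → j ≠ k → j ≠ l →
      hookLen lam i j = hookLen lam' j i := by
  intro i j _ _ hik hil hjk hjl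
  unfold hookLen
  rw [hlam, hlam']
  refine Finset.card_bij' (fun c _ => c.swap) (fun c _ => c.swap) ?_ ?_
    (fun _ _ => Prod.swap_swap _) (fun _ _ => Prod.swap_swap _)
  · rintro ⟨a, b⟩ h
    have hab := hsym a b
    simp only [← YoungDiagram.mem_cells] at hab
    simp only [mem_filter, mem_insert, Prod.mk.injEq, Prod.swap_prod_mk] at h ⊢
    grind
  · rintro ⟨a, b⟩ h
    have hab := hsym a b
    simp only [← YoungDiagram.mem_cells] at hab
    simp only [mem_filter, mem_insert, Prod.mk.injEq, Prod.swap_prod_mk] at h ⊢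
    grind
end

section
/- Let λ_sym be a symmetric Young diagram, (k,l) with k < l and (t,s) with t > s, s ≠ k, t ≠ l, and suppose λ = λ_sym ∪ {(k,l)} ∪ {(t,s)} and λ' = λ_sym ∪ {(k,l)} ∪ {(s,t)} are Young diagrams with k < s (so k < s < t < l). Then the boxes (s,l), (l,t), (t,l), (l,s) do not belong to λ, and the set Y of boxes of λ having one coordinate in {k,l} and the other in {s,t} is exactly {(s,k), (t,k), (k,s), (k,t)}. -/
/-!
The shape `lam` is the symmetric diagram `musym` together with the corners `(k, l)` and `(t, s)`,
so off these two boxes membership in `lam` is membership in `musym`, hence invariant under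
reflection. The box `(s, l)` is not in `musym`, because `(k, l)` lies below it and is missing;
reflecting, `(l, s)` is missing as well, and `(t, l)`, `(l, t)` dominate these two boxes.
Conversely `(t, s) ∈ lam` forces `(t, k)` into `lam`, hence into `musym`; reflection and the lower
set property then give `(k, t)`, `(s, k)` and `(k, s)`. These eight boxes are all the candidates
for membership in the filtered set.
-/


open Finset

/-- In the case `k < s`, the boxes `(s,l)`, `(l,t)`, `(t,l)`, `(l,s)` are not
in `λ`, and the set `Y` is exactly `{(s,k), (t,k), (k,s), (k,t)}`. -/
theorem stmt12 (musym : YoungDiagram) (hsym : musym.IsSymm)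
    (k l t s : ℕ) (hkl : k < l) (hts : s < t) (hsk : s ≠ k) (htl : t ≠ l)
    (hklmem : (k, l) ∉ musym) (htsmem : (t, s) ∉ musym)
    (lam lam' : YoungDiagram)
    (hlam : lam.cells = insert (k, l) (insert (t, s) musym.cells))
    (hlam' : lam'.cells = insert (k, l) (insert (s, t) musym.cells))
    (hks : k < s) :
    (s, l) ∉ lam ∧ (l, t) ∉ lam ∧ (t, l) ∉ lam ∧ (l, s) ∉ lam ∧
      lam.cells.filter (fun c =>
          (c.1 ∈ ({k, l} : Finset ℕ) ∧ c.2 ∈ ({s, t} : Finset ℕ)) ∨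
          (c.1 ∈ ({s, t} : Finset ℕ) ∧ c.2 ∈ ({k, l} : Finset ℕ))) =
        {(s, k), (t, k), (k, s), (k, t)} := by
  have hmem : ∀ a b : ℕ, (a, b) ∈ lam ↔ (a = k ∧ b = l) ∨ (a = t ∧ b = s) ∨ (a, b) ∈ musym := by
    intro a b
    rw [← YoungDiagram.mem_cells, hlam]
    simp
  have hsl_mu : (s, l) ∉ musym := fun h => hklmem (musym.up_left_mem hks.le le_rfl h)
  have hsl : (s, l) ∉ lam := by
    rw [hmem]
    rintro (⟨h, -⟩ | ⟨h, -⟩ | h)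
    · exact hsk h
    · exact hts.ne h
    · exact hsl_mu h
  have hls : (l, s) ∉ lam := by
    rw [hmem]
    rintro (⟨h, -⟩ | ⟨h, -⟩ | h)
    · exact hkl.ne' h
    · exact htl h.symm
    · exact hsl_mu ((hsym l s).1 h)
  have htl_lam : (t, l) ∉ lam := fun h => hsl (lam.up_left_mem hts.le le_rfl h)
  have hlt_lam : (l, t) ∉ lam := fun h => hls (lam.up_left_mem le_rfl hts.le h)
  have htk : (t, k) ∈ lam :=
    lam.up_left_mem le_rfl hks.le ((hmem t s).2 (Or.inr (Or.inl ⟨rfl, rfl⟩)))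
  have htk_mu : (t, k) ∈ musym := by
    rcases (hmem t k).1 htk with ⟨h, -⟩ | ⟨-, h⟩ | h
    · exact absurd h (hks.trans hts).ne'
    · exact absurd h hks.ne
    · exact h
  have hsk_lam : (s, k) ∈ lam := lam.up_left_mem hts.le le_rfl htk
  have hkt : (k, t) ∈ lam := (hmem k t).2 (Or.inr (Or.inr ((hsym t k).1 htk_mu)))
  have hks_lam : (k, s) ∈ lam := lam.up_left_mem le_rfl hts.le hkt
  refine ⟨hsl, hlt_lam, htl_lam, hls, ?_⟩
  ext ⟨a, b⟩
  simp only [mem_filter, YoungDiagram.mem_cells, mem_insert, mem_singleton, Prod.mk.injEq]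
  constructor
  · rintro ⟨h, ⟨rfl | rfl, rfl | rfl⟩ | ⟨rfl | rfl, rfl | rfl⟩⟩ <;> simp_all
  · rintro (⟨rfl, rfl⟩ | ⟨rfl, rfl⟩ | ⟨rfl, rfl⟩ | ⟨rfl, rfl⟩) <;> simp_all
end

section
/- Let λ_sym be a symmetric Young diagram, (k,l) with k < l and (t,s) with t > s, s ≠ k, t ≠ l, and suppose λ = λ_sym ∪ {(k,l)} ∪ {(t,s)} and λ' = λ_sym ∪ {(k,l)} ∪ {(s,t)} are Young diagrams with k < s (so k < s < t < l). Then the hook lengths of the four boxes (s,k), (t,k), (k,s), (k,t) are: in λ, h(s,k) = l−s+t−k−1, h(t,k) = l−t+s−k, h(k,s) = t−k+l−s+1, h(k,t) = s−k+l−t; and in λ', h'(s,k) = l−s+t−k, h'(t,k) = l−t+s−k−1, h'(k,s) = t−k+l−s, h'(k,t) = l−t+s−k+1. -/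
/-!
The hook length of a box `(i, j)` of a Young diagram is `(row length - j) + (column length - i) - 1`
(`hookLen_eq`), so only the lengths of rows and columns `k`, `s`, `t` are needed. Let `r` denote the
row lengths of `musym`, which are also its column lengths by symmetry. The boxes `(k, l)`, `(t, s)`,
`(s, t)` lie outside `musym`, while all boxes to their left lie in it, because `lam` and `lam'` are
lower sets (`row_of_added`). Hence `r k = l`, `r t = s` and `r s = t`, and `r s ≤ r k` gives `t < l`.
Adding a box lengthens its row and its column by one, and the formulas follow.
-/

open Finset

/-- Arm plus leg plus one, with the row length `R` and the column length `C` given through their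
membership criteria, so that they can be computed for an explicitly given set of cells. -/
lemma hookLen_eq {μ : YoungDiagram} {i j R C : ℕ}
    (hR : ∀ b, (i, b) ∈ μ.cells ↔ b < R) (hC : ∀ a, (a, j) ∈ μ.cells ↔ a < C) (hj : j < R) :
    hookLen μ i j = (R - j) + (C - i) - 1 := by
  have hi : i < C := (hC i).1 ((hR j).2 hj)
  -- The hook is the disjoint union of its row part and of its column part without the box `(i, j)`.
  have key : μ.cells.filter (fun c => (c.1 = i ∧ j ≤ c.2) ∨ (c.2 = j ∧ i ≤ c.1)) =
      ({i} ×ˢ Finset.Ico j R) ∪ (Finset.Ico (i + 1) C ×ˢ {j}) := by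
    ext ⟨a, b⟩
    simp only [mem_filter, mem_union, mem_product, mem_singleton, mem_Ico]
    constructor
    · rintro ⟨h, ⟨rfl, hb⟩ | ⟨rfl, ha⟩⟩
      · exact Or.inl ⟨rfl, hb, (hR b).1 h⟩
      · have := (hC a).1 h
        omega
    · rintro (⟨rfl, hb, hb'⟩ | ⟨⟨ha, ha'⟩, rfl⟩)
      · exact ⟨(hR b).2 hb', Or.inl ⟨rfl, hb⟩⟩
      · exact ⟨(hC a).2 ha', Or.inr ⟨rfl, by omega⟩⟩
  have hdisj : Disjoint ({i} ×ˢ Finset.Ico j R) (Finset.Ico (i + 1) C ×ˢ {j}) := by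
    rw [Finset.disjoint_left]
    rintro ⟨a, b⟩ h h'
    simp only [mem_product, mem_singleton, mem_Ico] at h h'
    omega
  rw [hookLen, key, card_union_of_disjoint hdisj]
  simp only [card_product, card_singleton, Nat.card_Ico]
  omega

/-- If adding `(i, j) ∉ ν` and a box in another row to `ν` yields a Young diagram, then row `i` of
`ν` has length `j`. -/
lemma row_of_added {ν μ : YoungDiagram} {i j a b : ℕ} (hμ : ∀ c, c ∈ μ.cells ↔
    c = (i, j) ∨ c = (a, b) ∨ c ∈ ν.cells) (hia : i ≠ a) (hn : (i, j) ∉ ν) (c : ℕ) :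
    (i, c) ∈ ν.cells ↔ c < j := by
  constructor
  · intro h
    by_contra hc
    exact hn (ν.up_left_mem le_rfl (not_lt.1 hc) h)
  · intro h
    have h1 : (i, c) ∈ μ.cells :=
      μ.up_left_mem le_rfl h.le ((YoungDiagram.mem_cells _).1 ((hμ _).2 (Or.inl rfl)))
    rcases (hμ _).1 h1 with h2 | h2 | h2
    · simp only [Prod.mk.injEq] at h2; omega
    · simp only [Prod.mk.injEq] at h2; omega
    · exact h2

/-- Explicit hook lengths of the four yellow boxes in the case `k < s`. -/
theorem stmt13 (musym : YoungDiagram) (hsym : musym.IsSymm)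
    (k l t s : ℕ) (hkl : k < l) (hts : s < t) (hsk : s ≠ k) (htl : t ≠ l)
    (hklmem : (k, l) ∉ musym) (htsmem : (t, s) ∉ musym)
    (lam lam' : YoungDiagram)
    (hlam : lam.cells = insert (k, l) (insert (t, s) musym.cells))
    (hlam' : lam'.cells = insert (k, l) (insert (s, t) musym.cells))
    (hks : k < s) :
    hookLen lam s k = l - s + t - k - 1 ∧
    hookLen lam t k = l - t + s - k ∧
    hookLen lam k s = t - k + l - s + 1 ∧
    hookLen lam k t = s - k + l - t ∧
    hookLen lam' s k = l - s + t - k ∧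
    hookLen lam' t k = l - t + s - k - 1 ∧
    hookLen lam' k s = t - k + l - s ∧
    hookLen lam' k t = l - t + s - k + 1 := by
  have hst : (s, t) ∉ musym := fun h => htsmem ((hsym s t).1 h)
  have hm : ∀ c, c ∈ lam.cells ↔ c = (k, l) ∨ c = (t, s) ∨ c ∈ musym.cells := by
    simp only [hlam, mem_insert, implies_true]
  have hm' : ∀ c, c ∈ lam'.cells ↔ c = (k, l) ∨ c = (s, t) ∨ c ∈ musym.cells := by
    simp only [hlam', mem_insert, implies_true]
  have rk : ∀ b, (k, b) ∈ musym.cells ↔ b < l := row_of_added hm (by omega) hklmem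
  have rt : ∀ b, (t, b) ∈ musym.cells ↔ b < s :=
    row_of_added (fun c => (hm c).trans or_left_comm) (by omega) htsmem
  have rs : ∀ b, (s, b) ∈ musym.cells ↔ b < t :=
    row_of_added (fun c => (hm' c).trans or_left_comm) (by omega) hst
  have hsymc : ∀ a b, (a, b) ∈ musym.cells ↔ (b, a) ∈ musym.cells := hsym
  have ck : ∀ a, (a, k) ∈ musym.cells ↔ a < l := fun a => (hsymc a k).trans (rk a)
  have ct : ∀ a, (a, t) ∈ musym.cells ↔ a < s := fun a => (hsymc a t).trans (rt a)
  have cs : ∀ a, (a, s) ∈ musym.cells ↔ a < t := fun a => (hsymc a s).trans (rs a)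
  -- Row `s` of `musym` is no longer than row `k`, so `t ≤ l`, and `t ≠ l` by hypothesis.
  have htl' : t < l := by
    have h : (k, t - 1) ∈ musym.cells :=
      musym.up_left_mem hks.le le_rfl ((YoungDiagram.mem_cells _).1 ((rs (t - 1)).2 (by omega)))
    have := (rk _).1 h
    omega
  -- Row and column lengths of `lam` (prefix `L`) and of `lam'` (prefix `M`).
  have Lrk : ∀ x, (k, x) ∈ lam.cells ↔ x < l + 1 := by
    intro x; rw [hm, rk]; simp only [Prod.mk.injEq, true_and]; omega
  have Lrs : ∀ x, (s, x) ∈ lam.cells ↔ x < t := by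
    intro x; rw [hm, rs]; simp only [Prod.mk.injEq]; omega
  have Lrt : ∀ x, (t, x) ∈ lam.cells ↔ x < s + 1 := by
    intro x; rw [hm, rt]; simp only [Prod.mk.injEq, true_and]; omega
  have Lck : ∀ x, (x, k) ∈ lam.cells ↔ x < l := by
    intro x; rw [hm, ck]; simp only [Prod.mk.injEq]; omega
  have Lcs : ∀ x, (x, s) ∈ lam.cells ↔ x < t + 1 := by
    intro x; rw [hm, cs]; simp only [Prod.mk.injEq, and_true]; omega
  have Lct : ∀ x, (x, t) ∈ lam.cells ↔ x < s := by
    intro x; rw [hm, ct]; simp only [Prod.mk.injEq]; omega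
  have Mrk : ∀ x, (k, x) ∈ lam'.cells ↔ x < l + 1 := by
    intro x; rw [hm', rk]; simp only [Prod.mk.injEq, true_and]; omega
  have Mrs : ∀ x, (s, x) ∈ lam'.cells ↔ x < t + 1 := by
    intro x; rw [hm', rs]; simp only [Prod.mk.injEq, true_and]; omega
  have Mrt : ∀ x, (t, x) ∈ lam'.cells ↔ x < s := by
    intro x; rw [hm', rt]; simp only [Prod.mk.injEq]; omega
  have Mck : ∀ x, (x, k) ∈ lam'.cells ↔ x < l := by
    intro x; rw [hm', ck]; simp only [Prod.mk.injEq]; omega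
  have Mcs : ∀ x, (x, s) ∈ lam'.cells ↔ x < t := by
    intro x; rw [hm', cs]; simp only [Prod.mk.injEq]; omega
  have Mct : ∀ x, (x, t) ∈ lam'.cells ↔ x < s + 1 := by
    intro x; rw [hm', ct]; simp only [Prod.mk.injEq, and_true]; omega
  refine ⟨?_, ?_, ?_, ?_, ?_, ?_, ?_, ?_⟩
  · rw [hookLen_eq Lrs Lck (by omega)]; omega
  · rw [hookLen_eq Lrt Lck (by omega)]; omega
  · rw [hookLen_eq Lrk Lcs (by omega)]; omega
  · rw [hookLen_eq Lrk Lct (by omega)]; omega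
  · rw [hookLen_eq Mrs Mck (by omega)]; omega
  · rw [hookLen_eq Mrt Mck (by omega)]; omega
  · rw [hookLen_eq Mrk Mcs (by omega)]; omega
  · rw [hookLen_eq Mrk Mct (by omega)]; omega
end

section
/- Let λ be a Young diagram with base subdiagram λ_sym such that each row and each column of λ contains at most one box not in λ_sym. Let (k_α,l_α), α in a finite index set, be the boxes of λ \ λ_sym above the line y = x and (t_β,s_β), β in a finite index set, the boxes below it, and set λ' = λ_sym ∪ ⋃_α{(k_α,l_α)} ∪ ⋃_β{(s_β,t_β)}. Fix a pair (α,β) and let Y_{αβ} be the four boxes with one coordinate in {k_α,l_α} and the other in {s_β,t_β}. Then for every box (i,j) ∈ Y_{αβ}, the hook length of (i,j) in λ equals the hook length of (i,j) in λ₁ = λ_sym ∪ {(k_α,l_α)} ∪ {(t_β,s_β)}, and the hook length of (i,j) in λ' equals the hook length of (i,j) in λ₂ = λ_sym ∪ {(k_α,l_α)} ∪ {(s_β,t_β)}. -/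
/-!
Call a box of `λ` *asymmetric* if it lies outside the base subdiagram, that is, if its reflection is
not in `λ`. If `(p, q)` is asymmetric, then among all the boxes in the rows and columns indexed by
`p` and `q` it is the only asymmetric one: row `p` and column `q` are covered by the hypotheses on
rows and columns, while a box of row `q` or column `p` has its reflection dominated by `(p, q)`
(`asymm_unique`). The hook of a box of `Y_{αβ}` lies in the rows and columns indexed by
`k, l, s, t`, so there `λ` agrees with `λ₁` and `λ'` agrees with `λ₂`, and a hook length only depends
on the boxes in one row and one column (`hookLen_congr`).
-/


open Finset

theorem hookLen_congr (μ ν : YoungDiagram) (i j : ℕ)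
    (h : ∀ a b : ℕ, a = i ∨ b = j → ((a, b) ∈ μ.cells ↔ (a, b) ∈ ν.cells)) :
    hookLen μ i j = hookLen ν i j := by
  unfold hookLen
  congr 1
  ext ⟨a, b⟩
  simp only [mem_filter]
  constructor
  · rintro ⟨hm, hh⟩
    exact ⟨(h a b (hh.imp And.left And.left)).1 hm, hh⟩
  · rintro ⟨hm, hh⟩
    exact ⟨(h a b (hh.imp And.left And.left)).2 hm, hh⟩

theorem mem_asymm (lam : YoungDiagram) (a b : ℕ) :
    (a, b) ∈ lam.cells \ baseCells lam ↔ (a, b) ∈ lam ∧ (b, a) ∉ lam := by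
  simp only [baseCells, mem_sdiff, mem_filter, YoungDiagram.mem_cells]
  tauto

/-- An asymmetric box `(p, q)` is the only asymmetric box in the rows and columns indexed by `p`
and `q`. -/
theorem asymm_unique (lam : YoungDiagram)
    (hrow : ∀ c ∈ lam.cells \ baseCells lam, ∀ c' ∈ lam.cells \ baseCells lam,
      c.1 = c'.1 → c = c')
    (hcol : ∀ c ∈ lam.cells \ baseCells lam, ∀ c' ∈ lam.cells \ baseCells lam,
      c.2 = c'.2 → c = c')
    (p q a b : ℕ) (hp : (p, q) ∈ lam.cells \ baseCells lam)
    (ha : (a, b) ∈ lam.cells \ baseCells lam)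
    (h : a = p ∨ a = q ∨ b = p ∨ b = q) : a = p ∧ b = q := by
  have hp' := (mem_asymm lam p q).1 hp
  have ha' := (mem_asymm lam a b).1 ha
  rcases h with h | h | h | h
  · exact Prod.mk.inj (hrow _ ha _ hp h)
  · subst h
    -- `(a, p) ∉ λ` forces `b < p`, so the reflection `(b, a)` is dominated by `(p, a)`.
    rcases le_total p b with hb | hb
    · exact absurd (lam.up_left_mem le_rfl hb ha'.1) hp'.2
    · exact absurd (lam.up_left_mem hb le_rfl hp'.1) ha'.2
  · subst h
    rcases le_total q a with hb | hb
    · exact absurd (lam.up_left_mem hb le_rfl ha'.1) hp'.2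
    · exact absurd (lam.up_left_mem le_rfl hb hp'.1) ha'.2
  · exact Prod.mk.inj (hcol _ ha _ hp h)

/-- Hook lengths of the yellow boxes of the group `Y_{αβ}` computed in `λ`
(resp. `λ'`) agree with those computed in `λ₁` (resp. `λ₂`). -/
theorem stmt14 (lam : YoungDiagram)
    (hrow : ∀ c ∈ lam.cells \ baseCells lam, ∀ c' ∈ lam.cells \ baseCells lam,
      c.1 = c'.1 → c = c')
    (hcol : ∀ c ∈ lam.cells \ baseCells lam, ∀ c' ∈ lam.cells \ baseCells lam,
      c.2 = c'.2 → c = c')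
    (lam' : YoungDiagram)
    (hlam' : lam'.cells =
      baseCells lam ∪ ((lam.cells \ baseCells lam).filter (fun c => c.1 < c.2)) ∪
        ((lam.cells \ baseCells lam).filter (fun c => c.2 < c.1)).image (fun c => (c.2, c.1)))
    (k l t s : ℕ)
    (hkl : k < l) (hklmem : (k, l) ∈ lam.cells \ baseCells lam)
    (hts : s < t) (htsmem : (t, s) ∈ lam.cells \ baseCells lam)
    (lam1 lam2 : YoungDiagram)
    (h1 : lam1.cells = insert (k, l) (insert (t, s) (baseCells lam)))
    (h2 : lam2.cells = insert (k, l) (insert (s, t) (baseCells lam))) :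
    ∀ i j : ℕ,
      ((i = k ∨ i = l) ∧ (j = s ∨ j = t)) ∨ ((i = s ∨ i = t) ∧ (j = k ∨ j = l)) →
      (i, j) ∈ lam → (i, j) ∈ lam' →
      hookLen lam i j = hookLen lam1 i j ∧ hookLen lam' i j = hookLen lam2 i j := by
  intro i j hij _ _
  have uk := asymm_unique lam hrow hcol k l
  have ut := asymm_unique lam hrow hcol t s
  -- The asymmetric boxes of `λ` with a coordinate in `{i, j}` are among `(k, l)` and `(t, s)`.
  have key : ∀ a b : ℕ, (a = i ∨ a = j ∨ b = i ∨ b = j) →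
      (a, b) ∈ lam.cells \ baseCells lam → (a = k ∧ b = l) ∨ (a = t ∧ b = s) := by
    intro a b h hab
    have h' : (a = k ∨ a = l ∨ b = k ∨ b = l) ∨ (a = t ∨ a = s ∨ b = t ∨ b = s) := by omega
    exact h'.imp (uk a b hklmem hab) (ut a b htsmem hab)
  constructor
  · apply hookLen_congr
    intro a b h
    have hk := key a b (by omega)
    have hb : (a, b) ∈ baseCells lam → (a, b) ∈ lam.cells := fun h => (mem_filter.1 h).1
    have h3 := (mem_sdiff.1 hklmem).1
    have h4 := (mem_sdiff.1 htsmem).1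
    rw [h1]
    simp only [mem_insert, Prod.mk.injEq]
    rw [mem_sdiff] at hk
    constructor
    · intro hm
      by_cases hc : (a, b) ∈ baseCells lam
      · exact Or.inr (Or.inr hc)
      · exact (hk ⟨hm, hc⟩).imp_right Or.inl
    · rintro (⟨rfl, rfl⟩ | ⟨rfl, rfl⟩ | hc)
      · exact h3
      · exact h4
      · exact hb hc
  · apply hookLen_congr
    intro a b h
    rw [hlam', h2]
    simp only [mem_union, mem_insert, mem_image, mem_filter, Prod.mk.injEq]
    constructor
    · rintro ((hc | ⟨hc, hlt⟩) | ⟨⟨a', b'⟩, ⟨hc, hlt⟩, rfl, rfl⟩)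
      · exact Or.inr (Or.inr hc)
      · rcases key a b (by omega) hc with h' | ⟨rfl, rfl⟩
        · exact Or.inl h'
        · exact absurd hlt hts.not_gt
      · rcases key a' b' (by dsimp only at h; omega) hc with ⟨rfl, rfl⟩ | ⟨rfl, rfl⟩
        · exact absurd hlt hkl.not_gt
        · exact Or.inr (Or.inl ⟨rfl, rfl⟩)
    · rintro (⟨rfl, rfl⟩ | ⟨rfl, rfl⟩ | hc)
      · exact Or.inl (Or.inr ⟨hklmem, hkl⟩)
      · exact Or.inr ⟨(b, a), ⟨htsmem, hts⟩, rfl, rfl⟩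
      · exact Or.inl (Or.inl hc)
end

section
/- Let λ be a Young diagram with base subdiagram λ_sym, and suppose each row and each column of λ contains at most one box of A = λ \ λ_sym. Let A_u be the boxes of A above the line y = x, A_d the boxes below it, and Ã_d the reflections of A_d across y = x. Then λ' = λ_sym ∪ A_u ∪ Ã_d is a Young diagram, all boxes of λ' \ λ_sym lie above the line y = x, and each column of λ' contains at most one box of λ' \ λ_sym. -/
/-!
Write `p = (i, j)` and `pᵗ = (j, i)`. A box `p` lies in `λ_sym ∪ A_u ∪ Ã_d` iff both `p` and `pᵗ`
lie in `λ`, or `i < j` and at least one of them does. This description makes the set a lower set: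
going down from a box of `λ'` to `q`, at least one of `q`, `qᵗ` is in `λ`, which suffices if `q` is
on or above the diagonal; if `q = (i', j')` is below it and `i < j`, then `j' < i' ≤ i < j` puts
both `q` and `qᵗ` below `p` and below `pᵗ`.

Two boxes of `A_u` in one column coincide by the column hypothesis, and two boxes of `Ã_d` by the
row hypothesis. A box `(i, j)` of `A_u` and a box `(i', j)` of `Ã_d` cannot share a column:
`(i, j) ∈ λ`, `(i', j) ∉ λ` gives `i < i'`, while `(j, i') ∈ λ`, `(j, i) ∉ λ` gives `i' < i`.
-/

open Finset

theorem mem_baseCells_iff (lam : YoungDiagram) (i j : ℕ) :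
    (i, j) ∈ baseCells lam ↔ (i, j) ∈ lam ∧ (j, i) ∈ lam := by
  simp [baseCells]

/-- The set `λ_sym ∪ A_u ∪ Ã_d` described by membership in `λ` alone. -/
theorem mem_reflected_iff (lam : YoungDiagram) (i j : ℕ) :
    (i, j) ∈ baseCells lam ∪ (lam.cells \ baseCells lam).filter (fun c => c.1 < c.2) ∪
        ((lam.cells \ baseCells lam).filter (fun c => c.2 < c.1)).image (fun c => (c.2, c.1)) ↔
      ((i, j) ∈ lam ∧ (j, i) ∈ lam) ∨ (i < j ∧ ((i, j) ∈ lam ∨ (j, i) ∈ lam)) := by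
  simp only [mem_union, mem_filter, mem_sdiff, mem_image, Prod.exists, mem_baseCells_iff,
    YoungDiagram.mem_cells, Prod.mk.injEq]
  constructor
  · rintro ((h | ⟨⟨h, -⟩, hij⟩) | ⟨a, b, ⟨⟨h, -⟩, hab⟩, rfl, rfl⟩)
    · exact Or.inl h
    · exact Or.inr ⟨hij, Or.inl h⟩
    · exact Or.inr ⟨hab, Or.inr h⟩
  · rintro (h | ⟨hij, h⟩)
    · exact Or.inl (Or.inl h)
    · by_cases h1 : (i, j) ∈ lam
      · by_cases h2 : (j, i) ∈ lam
        · exact Or.inl (Or.inl ⟨h1, h2⟩)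
        · exact Or.inl (Or.inr ⟨⟨h1, fun hs => h2 hs.2⟩, hij⟩)
      · exact Or.inr ⟨j, i, ⟨⟨h.resolve_left h1, fun hs => h1 hs.2⟩, hij⟩, rfl, rfl⟩

/-- The transformed set `λ' = λ_sym ∪ A_u ∪ Ã_d` is a Young diagram, all of
whose boxes outside `λ_sym` lie above the diagonal, with at most one such box per column. -/
theorem stmt15 (lam : YoungDiagram)
    (A : Finset (ℕ × ℕ)) (hA : A = lam.cells \ baseCells lam)
    (hrow : ∀ c ∈ A, ∀ c' ∈ A, c.1 = c'.1 → c = c')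
    (hcol : ∀ c ∈ A, ∀ c' ∈ A, c.2 = c'.2 → c = c')
    (Au Ad : Finset (ℕ × ℕ))
    (hAu : Au = A.filter (fun c => c.1 < c.2))
    (hAd : Ad = A.filter (fun c => c.2 < c.1)) :
    ∃ lam' : YoungDiagram,
      lam'.cells = baseCells lam ∪ Au ∪ Ad.image (fun c => (c.2, c.1)) ∧
      (∀ c ∈ lam'.cells \ baseCells lam, c.1 < c.2) ∧
      (∀ c ∈ lam'.cells \ baseCells lam, ∀ c' ∈ lam'.cells \ baseCells lam,
        c.2 = c'.2 → c = c') := by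
  subst hA hAu hAd
  have outside : ∀ i j, (i, j) ∈ lam → (j, i) ∉ lam → (i, j) ∈ lam.cells \ baseCells lam :=
    fun i j h h' => mem_sdiff.2 ⟨h, fun hs => h' ((mem_baseCells_iff lam i j).1 hs).2⟩
  refine ⟨⟨_, ?_⟩, rfl, ?_, ?_⟩
  · rintro ⟨i, j⟩ ⟨i', j'⟩ ⟨hi, hj⟩ hc
    simp only [mem_coe, mem_reflected_iff] at hc ⊢
    dsimp only at hi hj
    rcases hc with ⟨h1, h2⟩ | ⟨hij, h⟩
    · exact Or.inl ⟨lam.up_left_mem hi hj h1, lam.up_left_mem hj hi h2⟩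
    rcases lt_or_ge i' j' with hlt | hge
    · exact Or.inr ⟨hlt, h.imp (lam.up_left_mem hi hj) (lam.up_left_mem hj hi)⟩
    -- On or below the diagonal, `j' ≤ i' ≤ i < j`, so `(i', j')` and `(j', i')` both lie in `lam`.
    · rcases h with h | h
      · exact Or.inl ⟨lam.up_left_mem hi hj h, lam.up_left_mem (by omega) (by omega) h⟩
      · exact Or.inl ⟨lam.up_left_mem (by omega) (by omega) h, lam.up_left_mem hj hi h⟩
  · rintro ⟨i, j⟩ hc
    rw [mem_sdiff, mem_reflected_iff, mem_baseCells_iff] at hc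
    exact (hc.1.resolve_left hc.2).1
  · rintro ⟨i, j⟩ hc ⟨i', k⟩ hc' hk
    obtain rfl : j = k := hk
    rw [mem_sdiff, mem_reflected_iff, mem_baseCells_iff] at hc hc'
    obtain ⟨-, h⟩ := hc.1.resolve_left hc.2
    obtain ⟨-, h'⟩ := hc'.1.resolve_left hc'.2
    have n := hc.2
    have n' := hc'.2
    rcases h with h | h <;> rcases h' with h' | h'
    · exact hcol _ (outside _ _ h fun x => n ⟨h, x⟩) _ (outside _ _ h' fun x => n' ⟨h', x⟩) rfl
    · rcases le_total i i' with hle | hle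
      · exact absurd ⟨h, lam.up_left_mem le_rfl hle h'⟩ n
      · exact absurd ⟨lam.up_left_mem hle le_rfl h, h'⟩ n'
    · rcases le_total i i' with hle | hle
      · exact absurd ⟨lam.up_left_mem hle le_rfl h', h⟩ n
      · exact absurd ⟨h', lam.up_left_mem le_rfl hle h⟩ n'
    · have e := hrow _ (outside _ _ h fun x => n ⟨x, h⟩) _ (outside _ _ h' fun x => n' ⟨x, h'⟩) rfl
      rw [(Prod.mk.inj e).2]
end

section
/- Let λ_sym be a symmetric Young diagram and let boxes (k,l), k < l, and (t,s), t > s, with s ≠ k and t ≠ l, be such that λ = λ_sym ∪ {(k,l)} ∪ {(t,s)} and λ' = λ_sym ∪ {(k,l)} ∪ {(s,t)} are Young diagrams. Let Y be the set of boxes of λ with one coordinate in {k,l} and the other in {s,t} (which equals the corresponding set of boxes of λ'). Then ∏_{(i,j)∈λ} h(i,j) > ∏_{(i,j)∈λ'} h'(i,j) if and only if ∏_{(i,j)∈Y} h(i,j) > ∏_{(i,j)∈Y} h'(i,j), where h and h' denote hook lengths in λ and λ' respectively. -/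
/-!
The four indices `k, l, s, t` are pairwise distinct: if `t = k` or `s = l`, then a diagonal cell
would force one of the two added cells into the symmetric diagram. Adding a cell `a` to a diagram
raises the hook length of `c` by one exactly when `a` lies on the hook of `c`.

Outside `Y` the hook products of `λ` and `λ'` agree. Consider the involution that reflects a cell
having a coordinate in `{s, t}` and fixes every other cell. A reflected cell outside `Y` has no
coordinate in `{k, l}`, so neither it nor its reflection sees `(k, l)`, and it sees `(t, s)` iff its
reflection sees `(s, t)`. A fixed cell sees neither `(t, s)` nor `(s, t)`. Since the symmetric
diagram has reflection-invariant hook lengths, the involution carries `λ \ Y` to `λ' \ Y` and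
preserves hook lengths. This common positive factor cancels from the global inequality.
-/

open Finset

/-- The cell `a` lies weakly beyond `c` in the row or the column of `c`; for a cell `a` of a diagram
this says that `a` belongs to the hook of `c`. -/
def OnHook (c a : ℕ × ℕ) : Prop := (a.1 = c.1 ∧ c.2 ≤ a.2) ∨ (a.2 = c.2 ∧ c.1 ≤ a.1)

instance (c a : ℕ × ℕ) : Decidable (OnHook c a) := by unfold OnHook; infer_instance

theorem onHook_swap (c a : ℕ × ℕ) : OnHook c.swap a.swap ↔ OnHook c a := by
  simp only [OnHook, Prod.fst_swap, Prod.snd_swap]; tauto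

theorem hookLen_eq_s16 (μ : YoungDiagram) (c : ℕ × ℕ) :
    hookLen μ c.1 c.2 = (μ.cells.filter (OnHook c)).card := by
  unfold hookLen OnHook; congr

theorem hookLen_swap {μ : YoungDiagram} (h : μ.IsSymm) (c : ℕ × ℕ) :
    hookLen μ c.swap.1 c.swap.2 = hookLen μ c.1 c.2 := by
  rw [hookLen_eq_s16, hookLen_eq_s16]
  have key : ∀ c a : ℕ × ℕ, a ∈ μ.cells.filter (OnHook c) →
      a.swap ∈ μ.cells.filter (OnHook c.swap) := by
    intro c a ha
    rw [mem_filter] at ha ⊢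
    exact ⟨(h a.1 a.2).1 ha.1, (onHook_swap c a).2 ha.2⟩
  refine card_nbij' Prod.swap Prod.swap ?_ ?_ ?_ ?_
  · intro a ha; simpa using key c.swap a ha
  · intro a ha; exact key c a ha
  · intro a _; simp
  · intro a _; simp

theorem hookLen_insert {μ ν : YoungDiagram} {a b : ℕ × ℕ} (hν : ν.cells = insert a (insert b μ.cells))
    (hab : a ≠ b) (ha : a ∉ μ) (hb : b ∉ μ) (c : ℕ × ℕ) :
    hookLen ν c.1 c.2 = hookLen μ c.1 c.2 + (if OnHook c a then 1 else 0)
      + (if OnHook c b then 1 else 0) := by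
  have ha' : a ∉ μ.cells := ha
  have hb' : b ∉ μ.cells := hb
  rw [hookLen_eq_s16, hookLen_eq_s16, hν, filter_insert, filter_insert]
  split_ifs <;> simp [*]

theorem hookLen_pos {μ : YoungDiagram} {c : ℕ × ℕ} (hc : c ∈ μ.cells) :
    0 < hookLen μ c.1 c.2 := by
  rw [hookLen_eq_s16]
  exact card_pos.2 ⟨c, mem_filter.2 ⟨hc, Or.inl ⟨rfl, le_rfl⟩⟩⟩

/-- Reflects a cell with a coordinate in `{s, t}`, and fixes every other cell. -/
def reflST (s t : ℕ) (c : ℕ × ℕ) : ℕ × ℕ :=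
  if c.1 = s ∨ c.1 = t ∨ c.2 = s ∨ c.2 = t then c.swap else c

theorem reflST_reflST (s t : ℕ) (c : ℕ × ℕ) : reflST s t (reflST s t c) = c := by
  unfold reflST
  split_ifs <;> simp_all

/-- The global hook-product inequality between `λ` and `λ'` reduces to the
inequality over the set `Y` of yellow boxes. -/
theorem stmt16 (musym : YoungDiagram) (hsym : musym.IsSymm)
    (k l t s : ℕ) (hkl : k < l) (hts : s < t) (hsk : s ≠ k) (htl : t ≠ l)
    (hklmem : (k, l) ∉ musym) (htsmem : (t, s) ∉ musym)
    (lam lam' : YoungDiagram)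
    (hlam : lam.cells = insert (k, l) (insert (t, s) musym.cells))
    (hlam' : lam'.cells = insert (k, l) (insert (s, t) musym.cells))
    (Y : Finset (ℕ × ℕ))
    (hY : Y = lam.cells.filter (fun c =>
      (c.1 ∈ ({k, l} : Finset ℕ) ∧ c.2 ∈ ({s, t} : Finset ℕ)) ∨
      (c.1 ∈ ({s, t} : Finset ℕ) ∧ c.2 ∈ ({k, l} : Finset ℕ)))) :
    Y = lam'.cells.filter (fun c =>
      (c.1 ∈ ({k, l} : Finset ℕ) ∧ c.2 ∈ ({s, t} : Finset ℕ)) ∨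
      (c.1 ∈ ({s, t} : Finset ℕ) ∧ c.2 ∈ ({k, l} : Finset ℕ))) ∧
    ((∏ c ∈ lam'.cells, hookLen lam' c.1 c.2) < (∏ c ∈ lam.cells, hookLen lam c.1 c.2) ↔
      (∏ c ∈ Y, hookLen lam' c.1 c.2) < ∏ c ∈ Y, hookLen lam c.1 c.2) := by
  have hst : (s, t) ∉ musym := fun h => htsmem ((hsym s t).1 h)
  have hdiag : ∀ i, (i, i) ∈ lam → (i, i) ∈ musym := by
    intro i hi
    have hi' : (i, i) ∈ lam.cells := hi
    rw [hlam] at hi'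
    simp only [mem_insert, Prod.mk.injEq] at hi'
    rcases hi' with h | h | h
    · omega
    · omega
    · exact h
  have hklm : (k, l) ∈ lam := by
    change (k, l) ∈ lam.cells
    rw [hlam]; simp
  have htsm : (t, s) ∈ lam := by
    change (t, s) ∈ lam.cells
    rw [hlam]; simp
  -- If `t = k`, the row of `(k, l)` in `λ` contains the diagonal cell `(k, k)`, which then forces
  -- `(t, s)` into the symmetric diagram.
  have htk : t ≠ k := by
    rintro rfl
    exact htsmem (musym.up_left_mem le_rfl hts.le
      (hdiag t (lam.up_left_mem le_rfl hkl.le hklm)))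
  -- If `s = l`, the column of `(t, s)` in `λ` contains `(l, l)`, which then forces `(k, l)` into
  -- the symmetric diagram.
  have hsl : s ≠ l := by
    rintro rfl
    exact hklmem (musym.up_left_mem hkl.le le_rfl
      (hdiag s (lam.up_left_mem hts.le le_rfl htsm)))
  set Q : ℕ × ℕ → Prop := fun c =>
      (c.1 ∈ ({k, l} : Finset ℕ) ∧ c.2 ∈ ({s, t} : Finset ℕ)) ∨
      (c.1 ∈ ({s, t} : Finset ℕ) ∧ c.2 ∈ ({k, l} : Finset ℕ)) with hQ
  have hQts : ¬ Q (t, s) := by simp [hQ]; omega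
  have hQst : ¬ Q (s, t) := by simp [hQ]; omega
  have hY' : Y = lam'.cells.filter Q := by
    rw [hY]
    ext c
    rw [mem_filter, mem_filter, hlam, hlam']
    refine and_congr_left fun (hc : Q c) => ?_
    have h1 : c ≠ (t, s) := fun h => hQts (h ▸ hc)
    have h2 : c ≠ (s, t) := fun h => hQst (h ▸ hc)
    simp only [mem_insert, h1, h2, false_or]
  refine ⟨hY', ?_⟩
  have hQrefl : ∀ c, Q (reflST s t c) ↔ Q c := by
    intro c
    unfold reflST
    split_ifs
    · exact or_comm.trans (or_congr and_comm and_comm)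
    · rfl
  have hsymrefl : ∀ c, c ∈ musym.cells → reflST s t c ∈ musym.cells := by
    intro c hc
    unfold reflST
    split_ifs
    · exact (hsym c.1 c.2).1 hc
    · exact hc
  have hrkl : reflST s t (k, l) = (k, l) := by
    unfold reflST; rw [if_neg]; simp; omega
  have hrts : reflST s t (t, s) = (s, t) := by simp [reflST]
  have hrst : reflST s t (s, t) = (t, s) := by simp [reflST]
  have hhook : ∀ c, ¬ Q c →
      hookLen lam c.1 c.2 = hookLen lam' (reflST s t c).1 (reflST s t c).2 := by
    intro c hc
    rw [hookLen_insert hlam (by simp; omega) hklmem htsmem,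
      hookLen_insert hlam' (by simp; omega) hklmem hst]
    by_cases h : c.1 = s ∨ c.1 = t ∨ c.2 = s ∨ c.2 = t
    · have hr : reflST s t c = c.swap := if_pos h
      rw [hr, hookLen_swap hsym]
      have h1 : ¬ OnHook c (k, l) := by
        simp only [hQ, mem_insert, mem_singleton] at hc
        simp only [OnHook]; omega
      have h2 : ¬ OnHook c.swap (k, l) := by
        simp only [hQ, mem_insert, mem_singleton] at hc
        simp only [OnHook, Prod.fst_swap, Prod.snd_swap]; omega
      have h3 : OnHook c.swap (s, t) ↔ OnHook c (t, s) := onHook_swap c (t, s)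
      simp only [h1, h2, h3]
    · have hr : reflST s t c = c := if_neg h
      have h1 : ¬ OnHook c (t, s) := by simp only [OnHook]; omega
      have h2 : ¬ OnHook c (s, t) := by simp only [OnHook]; omega
      rw [hr, if_neg h1, if_neg h2]
  have hrest : ∏ c ∈ lam.cells.filter (fun c => ¬ Q c), hookLen lam c.1 c.2 =
      ∏ c ∈ lam'.cells.filter (fun c => ¬ Q c), hookLen lam' c.1 c.2 := by
    refine prod_nbij' (reflST s t) (reflST s t) ?_ ?_
      (fun c _ => reflST_reflST s t c) (fun c _ => reflST_reflST s t c)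
      (fun c hc => hhook c (mem_filter.1 hc).2)
    · intro c hc
      rw [mem_filter, hlam, mem_insert, mem_insert] at hc
      rw [mem_filter, hQrefl, hlam', mem_insert, mem_insert]
      refine ⟨?_, hc.2⟩
      rcases hc.1 with rfl | rfl | h
      · exact Or.inl hrkl
      · exact Or.inr (Or.inl hrts)
      · exact Or.inr (Or.inr (hsymrefl c h))
    · intro c hc
      rw [mem_filter, hlam', mem_insert, mem_insert] at hc
      rw [mem_filter, hQrefl, hlam, mem_insert, mem_insert]
      refine ⟨?_, hc.2⟩
      rcases hc.1 with rfl | rfl | h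
      · exact Or.inl hrkl
      · exact Or.inr (Or.inl hrst)
      · exact Or.inr (Or.inr (hsymrefl c h))
  have hpos : 0 < ∏ c ∈ lam'.cells.filter (fun c => ¬ Q c), hookLen lam' c.1 c.2 :=
    prod_pos fun c hc => hookLen_pos (mem_filter.1 hc).1
  rw [← prod_filter_mul_prod_filter_not lam.cells Q,
    ← prod_filter_mul_prod_filter_not lam'.cells Q, hrest, ← hY', ← hY]
  exact mul_lt_mul_iff_left₀ hpos
end
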